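/- arXiv:1211.3270 — 2 statements merged into one kernel-verified Lean document; each statement's English description precedes it below -/
import Mathlib

section
/- Let -1 < α, β < -1/2. Then for all t > 0 and θ, φ ∈ [0,π], 𝓗_t^{α,β}(θ,φ) = ∫_{(-1,1)} ∫_{(-1,1)} ∂_u ∂_v Ψ^{α,β}(t,θ,φ,u,v) Π_α(u) Π_β(v) du dv + ∫_{[-1,1]} ∫_{(-1,1)} (−∂_u Ψ^{α,β}(t,θ,φ,u,v)) Π_α(u) du dΠ_{-1/2}(v) + ∫_{(-1,1)} ∫_{[-1,1]} (−∂_v Ψ^{α,β}(t,θ,φ,u,v)) dΠ_{-1/2}(u) Π_β(v) dv + ∫_{[-1,1]} ∫_{[-1,1]} Ψ^{α,β}(t,θ,φ,u,v) dΠ_{-1/2}(u) dΠ_{-1/2}(v). -/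
open MeasureTheory Real Set
open scoped ENNReal Classical

noncomputable def cab (α β : ℝ) : ℝ :=
  Real.Gamma (α + β + 2) / (2 ^ (α + β + 1) * Real.Gamma (α + 1) * Real.Gamma (β + 1))

noncomputable def F4 (a₁ a₂ b₁ b₂ x y : ℝ) : ℝ :=
  ∑' p : ℕ × ℕ,
    (Polynomial.eval a₁ (ascPochhammer ℝ (p.1 + p.2)) *
      Polynomial.eval a₂ (ascPochhammer ℝ (p.1 + p.2))) /
    (Polynomial.eval b₁ (ascPochhammer ℝ p.1) * Polynomial.eval b₂ (ascPochhammer ℝ p.2) *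
      (Nat.factorial p.1) * (Nat.factorial p.2)) * x ^ p.1 * y ^ p.2

noncomputable def Hker (α β t θ φ : ℝ) : ℝ :=
  cab α β * Real.sinh (t / 2) / Real.cosh (t / 2) ^ (α + β + 2) *
    F4 ((α + β + 2) / 2) ((α + β + 3) / 2) (α + 1) (β + 1)
      ((Real.sin (θ / 2) * Real.sin (φ / 2) / Real.cosh (t / 2)) ^ 2)
      ((Real.cos (θ / 2) * Real.cos (φ / 2) / Real.cosh (t / 2)) ^ 2)

noncomputable def qf (θ φ u v : ℝ) : ℝ :=
  1 - u * Real.sin (θ / 2) * Real.sin (φ / 2) - v * Real.cos (θ / 2) * Real.cos (φ / 2)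

noncomputable def Psi (α β t θ φ u v : ℝ) : ℝ :=
  cab α β * Real.sinh (t / 2) / (Real.cosh (t / 2) - 1 + qf θ φ u v) ^ (α + β + 2)

noncomputable def PsiE (α β t θ φ u v : ℝ) : ℝ :=
  (Psi α β t θ φ u v + Psi α β t θ φ (-u) v + Psi α β t θ φ u (-v) +
    Psi α β t θ φ (-u) (-v)) / 4

noncomputable def PiMeas (ν : ℝ) : Measure ℝ :=
  if ν = -(1/2) then (2⁻¹ : ℝ≥0∞) • (Measure.dirac (-1) + Measure.dirac 1)
  else (volume.restrict (Icc (-1 : ℝ) 1)).withDensity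
    (fun u => ENNReal.ofReal
      (Real.Gamma (ν + 1) / (Real.sqrt π * Real.Gamma (ν + 1/2)) * (1 - u ^ 2) ^ (ν - 1/2)))

noncomputable def PiFun (γ u : ℝ) : ℝ :=
  Real.Gamma (γ + 1) / (Real.sqrt π * Real.Gamma (γ + 1/2)) *
    ∫ w in (0 : ℝ)..u, (1 - w ^ 2) ^ (γ - 1/2)

noncomputable def PiInt (ν : ℝ) (S : Set ℝ) (f : ℝ → ℝ) : ℝ :=
  if ν = -(1/2) then
    ((if (-1 : ℝ) ∈ S then f (-1) else 0) + (if (1 : ℝ) ∈ S then f 1 else 0)) / 2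
  else ∫ u in S, f u *
    (Real.Gamma (ν + 1) / (Real.sqrt π * Real.Gamma (ν + 1/2)) * (1 - u ^ 2) ^ (ν - 1/2))

noncomputable def muab (α β : ℝ) : Measure ℝ :=
  (volume.restrict (Icc (0 : ℝ) π)).withDensity
    (fun θ => ENNReal.ofReal (Real.sin (θ / 2) ^ (2 * α + 1) * Real.cos (θ / 2) ^ (2 * β + 1)))

def ballI (θ r : ℝ) : Set ℝ := Ioo (θ - r) (θ + r) ∩ Icc 0 π

theorem hasSum_ascPochhammer_mul_pow (μ : ℝ) {z : ℝ} (hz : |z| < 1) :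
    HasSum (fun n : ℕ => (ascPochhammer ℝ n).eval μ / n.factorial * z ^ n) ((1 - z) ^ (-μ)) := by
  have h := (one_div_one_sub_rpow_hasFPowerSeriesOnBall_zero μ).hasSum (y := z)
    (by simpa [← ofReal_norm] using hz)
  have h1 : (0 : ℝ) ≤ 1 - z := by linarith [(abs_lt.1 hz).2]
  rw [zero_add, one_div, ← rpow_neg h1] at h
  refine h.congr_fun ?_
  intro n
  have hc : Ring.choose (μ + n - 1) n = (ascPochhammer ℝ n).eval μ / n.factorial := by
    have h2 := Ring.factorial_nsmul_multichoose_eq_ascPochhammer μ n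
    rw [Polynomial.ascPochhammer_smeval_eq_eval, nsmul_eq_mul] at h2
    rw [eq_div_iff (by positivity), mul_comm, ← h2, Ring.choose]
    congr 2
    ring
  simp [hc, mul_comm]

theorem ascPochhammer_eval_nonneg {μ : ℝ} (hμ : 0 < μ) (n : ℕ) :
    0 ≤ (ascPochhammer ℝ n).eval μ :=
  (ascPochhammer_pos n μ hμ).le

theorem sum_antidiagonal_ascPochhammer (μ x y : ℝ) (n : ℕ) :
    ∑ p ∈ Finset.HasAntidiagonal.antidiagonal n, (ascPochhammer ℝ (p.1 + p.2)).eval μ /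
      (p.1.factorial * p.2.factorial) * x ^ p.1 * y ^ p.2 =
    (ascPochhammer ℝ n).eval μ / n.factorial * (x + y) ^ n := by
  rw [Commute.add_pow' (Commute.all x y), Finset.mul_sum]
  refine Finset.sum_congr rfl fun p hp => ?_
  rw [Finset.HasAntidiagonal.mem_antidiagonal] at hp
  subst hp
  rw [nsmul_eq_mul, Nat.cast_add_choose]
  have := Nat.factorial_ne_zero (p.1 + p.2)
  field_simp

theorem hasSum_ascPochhammer_mul_pow_mul_pow {μ x y : ℝ} (hμ : 0 < μ) (h : |x| + |y| < 1) :
    HasSum (fun p : ℕ × ℕ => (ascPochhammer ℝ (p.1 + p.2)).eval μ /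
      (p.1.factorial * p.2.factorial) * x ^ p.1 * y ^ p.2) ((1 - x - y) ^ (-μ)) := by
  set f : ℝ → ℝ → ℕ × ℕ → ℝ := fun x y p => (ascPochhammer ℝ (p.1 + p.2)).eval μ /
      (p.1.factorial * p.2.factorial) * x ^ p.1 * y ^ p.2 with hf
  have key : ∀ x y : ℝ, ∀ n, ∑ p : Finset.HasAntidiagonal.antidiagonal n, f x y p =
      (ascPochhammer ℝ n).eval μ / n.factorial * (x + y) ^ n := by
    intro x y n
    rw [Finset.sum_coe_sort (Finset.HasAntidiagonal.antidiagonal n) (f x y), hf]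
    exact sum_antidiagonal_ascPochhammer μ x y n
  have habs : ∀ p, ‖f x y p‖ = f |x| |y| p := by
    intro p
    have := ascPochhammer_eval_nonneg hμ (p.1 + p.2)
    simp only [hf, norm_eq_abs, abs_mul, abs_pow]
    rw [abs_of_nonneg (by positivity)]
  have hs : Summable (f |x| |y|) := by
    rw [← Finset.HasAntidiagonal.sigmaAntidiagonalEquivProd.summable_iff,
      summable_sigma_of_nonneg]
    · refine ⟨fun n => Summable.of_finite, ?_⟩
      have := (hasSum_ascPochhammer_mul_pow μ (z := |x| + |y|)
        (by rwa [abs_of_nonneg (by positivity)])).summable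
      refine this.congr fun n => ?_
      rw [← key, tsum_fintype]
      rfl
    · intro p
      simp only [Function.comp, ← habs]
      positivity
  have hs' : Summable (f x y) := Summable.of_norm (by simpa only [habs] using hs)
  have h2 := hs'
  rw [← Finset.HasAntidiagonal.sigmaAntidiagonalEquivProd.summable_iff] at h2
  have h1 := hasSum_ascPochhammer_mul_pow μ (z := x + y) ((abs_add_le x y).trans_lt h)
  have h3 := h2.hasSum.sigma (g := fun n => (ascPochhammer ℝ n).eval μ / n.factorial * (x + y) ^ n)
    (fun n => by rw [← key]; exact hasSum_fintype _)
  have h4 := Finset.HasAntidiagonal.sigmaAntidiagonalEquivProd.tsum_eq (f x y)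
  have h5 := hs'.hasSum
  rw [← h4] at h5
  rw [sub_sub, h1.unique h3]
  exact h5

/-- Coefficients of the double power series of `(C - a * u - b * v) ^ (-μ)` in `u`, `v`. -/
noncomputable def expCoeff (C a b μ : ℝ) (p : ℕ × ℕ) : ℝ :=
  C ^ (-μ) * ((ascPochhammer ℝ (p.1 + p.2)).eval μ /
    (p.1.factorial * p.2.factorial) * (a / C) ^ p.1 * (b / C) ^ p.2)

theorem expCoeff_nonneg {C a b μ : ℝ} (hμ : 0 < μ) (ha : 0 ≤ a) (hb : 0 ≤ b) (hC : a + b < C)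
    (p : ℕ × ℕ) : 0 ≤ expCoeff C a b μ p := by
  have := ascPochhammer_eval_nonneg hμ (p.1 + p.2)
  have : 0 ≤ C := by linarith
  unfold expCoeff
  positivity

theorem sub_mul_sub_mul_pos {C a b u v : ℝ} (ha : 0 ≤ a) (hb : 0 ≤ b) (hC : a + b < C)
    (hu : |u| ≤ 1) (hv : |v| ≤ 1) : 0 < C - a * u - b * v := by
  have h1 := mul_le_mul_of_nonneg_left ((le_abs_self u).trans hu) ha
  have h2 := mul_le_mul_of_nonneg_left ((le_abs_self v).trans hv) hb
  linarith

theorem hasSum_expCoeff {C a b μ u v : ℝ} (hμ : 0 < μ) (ha : 0 ≤ a) (hb : 0 ≤ b) (hC : a + b < C)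
    (hu : |u| ≤ 1) (hv : |v| ≤ 1) :
    HasSum (fun p => expCoeff C a b μ p * (u ^ p.1 * v ^ p.2)) ((C - a * u - b * v) ^ (-μ)) := by
  have hC0 : 0 < C := by linarith
  have hlt : |a / C * u| + |b / C * v| < 1 := by
    rw [abs_mul, abs_mul, abs_of_nonneg (a := a / C) (by positivity),
      abs_of_nonneg (a := b / C) (by positivity)]
    have h1 := mul_le_mul_of_nonneg_left hu (show 0 ≤ a / C by positivity)
    have h2 := mul_le_mul_of_nonneg_left hv (show 0 ≤ b / C by positivity)
    have : a / C + b / C < 1 := by rw [← add_div, div_lt_one hC0]; exact hC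
    linarith
  have h := (hasSum_ascPochhammer_mul_pow_mul_pow hμ hlt).mul_left (C ^ (-μ))
  have hpos := sub_mul_sub_mul_pos ha hb hC hu hv
  have h0 : C - a * u - b * v = C * (1 - a / C * u - b / C * v) := by field_simp
  rw [← mul_rpow hC0.le (by rw [h0] at hpos; exact (pos_of_mul_pos_right hpos hC0.le).le), ← h0] at h
  refine h.congr_fun fun p => ?_
  simp only [expCoeff, mul_pow]
  ring

theorem ascPochhammer_eval_succ_left (μ : ℝ) (n : ℕ) :
    (ascPochhammer ℝ (n + 1)).eval μ = μ * (ascPochhammer ℝ n).eval (μ + 1) := by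
  simp [ascPochhammer_succ_left, Polynomial.eval_comp]

theorem expCoeff_succ_left {C a b μ : ℝ} (hC : 0 < C) (p : ℕ × ℕ) :
    expCoeff C a b μ (p.1 + 1, p.2) * (p.1 + 1 : ℕ) = μ * a * expCoeff C a b (μ + 1) p := by
  simp only [expCoeff]
  rw [show p.1 + 1 + p.2 = p.1 + p.2 + 1 by ring, ascPochhammer_eval_succ_left, neg_add,
    rpow_add hC, rpow_neg_one, Nat.factorial_succ]
  push_cast
  rw [pow_succ]
  field_simp

theorem expCoeff_succ_right {C a b μ : ℝ} (hC : 0 < C) (p : ℕ × ℕ) :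
    expCoeff C a b μ (p.1, p.2 + 1) * (p.2 + 1 : ℕ) = μ * b * expCoeff C a b (μ + 1) p := by
  simp only [expCoeff]
  rw [show p.1 + (p.2 + 1) = p.1 + p.2 + 1 by ring, ascPochhammer_eval_succ_left, neg_add,
    rpow_add hC, rpow_neg_one, Nat.factorial_succ]
  push_cast
  rw [pow_succ]
  field_simp

theorem hasSum_expCoeff_deriv_left {C a b μ u v : ℝ} (hμ : 0 < μ) (ha : 0 ≤ a) (hb : 0 ≤ b)
    (hC : a + b < C) (hu : |u| ≤ 1) (hv : |v| ≤ 1) :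
    HasSum (fun p => expCoeff C a b μ p * ((p.1 * u ^ (p.1 - 1)) * v ^ p.2))
      (μ * a * (C - a * u - b * v) ^ (-(μ + 1))) := by
  have hi : Function.Injective (fun p : ℕ × ℕ => (p.1 + 1, p.2)) := by
    intro p q h; simp only [Prod.mk.injEq] at h; ext <;> lia
  rw [← hi.hasSum_iff]
  · refine ((hasSum_expCoeff (μ := μ + 1) (by linarith) ha hb hC hu hv).mul_left
      (μ * a)).congr_fun fun p => ?_
    rw [← mul_assoc, ← expCoeff_succ_left (by linarith)]
    simp only [Function.comp, Nat.add_sub_cancel]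
    ring
  · rintro ⟨j, l⟩ h
    rcases j with _ | j
    · simp
    · exact (h ⟨(j, l), rfl⟩).elim

theorem hasSum_expCoeff_deriv_right {C a b μ u v : ℝ} (hμ : 0 < μ) (ha : 0 ≤ a) (hb : 0 ≤ b)
    (hC : a + b < C) (hu : |u| ≤ 1) (hv : |v| ≤ 1) :
    HasSum (fun p => expCoeff C a b μ p * (u ^ p.1 * (p.2 * v ^ (p.2 - 1))))
      (μ * b * (C - a * u - b * v) ^ (-(μ + 1))) := by
  have hi : Function.Injective (fun p : ℕ × ℕ => (p.1, p.2 + 1)) := by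
    intro p q h; simp only [Prod.mk.injEq] at h; ext <;> lia
  rw [← hi.hasSum_iff]
  · refine ((hasSum_expCoeff (μ := μ + 1) (by linarith) ha hb hC hu hv).mul_left
      (μ * b)).congr_fun fun p => ?_
    rw [← mul_assoc, ← expCoeff_succ_right (by linarith)]
    simp only [Function.comp, Nat.add_sub_cancel]
    ring
  · rintro ⟨j, l⟩ h
    rcases l with _ | l
    · simp
    · exact (h ⟨(j, l), rfl⟩).elim

theorem hasSum_expCoeff_deriv_both {C a b μ u v : ℝ} (hμ : 0 < μ) (ha : 0 ≤ a) (hb : 0 ≤ b)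
    (hC : a + b < C) (hu : |u| ≤ 1) (hv : |v| ≤ 1) :
    HasSum (fun p => expCoeff C a b μ p * ((p.1 * u ^ (p.1 - 1)) * (p.2 * v ^ (p.2 - 1))))
      (μ * (μ + 1) * a * b * (C - a * u - b * v) ^ (-(μ + 2))) := by
  have hi : Function.Injective (fun p : ℕ × ℕ => (p.1 + 1, p.2)) := by
    intro p q h; simp only [Prod.mk.injEq] at h; ext <;> lia
  rw [← hi.hasSum_iff]
  · have h := (hasSum_expCoeff_deriv_right (μ := μ + 1) (by linarith) ha hb hC hu hv).mul_left
      (μ * a)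
    rw [show μ * a * ((μ + 1) * b * (C - a * u - b * v) ^ (-(μ + 1 + 1))) =
      μ * (μ + 1) * a * b * (C - a * u - b * v) ^ (-(μ + 2)) by
        rw [show μ + 1 + 1 = μ + 2 by ring]; ring] at h
    refine h.congr_fun fun p => ?_
    rw [← mul_assoc (μ * a), ← expCoeff_succ_left (by linarith)]
    simp only [Function.comp, Nat.add_sub_cancel]
    ring
  · rintro ⟨j, l⟩ h
    rcases j with _ | j
    · simp
    · exact (h ⟨(j, l), rfl⟩).elim

theorem one_sub_sq_pos {u : ℝ} (hu : u ∈ Ioo (-1 : ℝ) 1) : 0 < 1 - u ^ 2 := by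
  nlinarith [hu.1, hu.2]

theorem integrableOn_one_sub_sq_rpow {δ : ℝ} (h1 : -1 < δ) (h0 : δ < 0) :
    IntegrableOn (fun u : ℝ => (1 - u ^ 2) ^ δ) (Ioo (-1) 1) := by
  have hA : IntegrableOn (fun u : ℝ => (1 - u) ^ δ) (Ioo (-1) 1) := by
    have := (intervalIntegral.intervalIntegrable_rpow' (a := 2) (b := 0) h1).comp_sub_left 1
    norm_num at this
    rwa [intervalIntegrable_iff_integrableOn_Ioo_of_le (by norm_num)] at this
  have hB : IntegrableOn (fun u : ℝ => (1 + u) ^ δ) (Ioo (-1) 1) := by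
    have := (intervalIntegral.intervalIntegrable_rpow' (a := 0) (b := 2) h1).comp_add_left 1
    norm_num at this
    rwa [intervalIntegrable_iff_integrableOn_Ioo_of_le (by norm_num)] at this
  refine (hA.add hB).mono' ?_ ?_
  · exact (by fun_prop : Measurable fun u : ℝ => (1 - u ^ 2) ^ δ).aestronglyMeasurable
  · filter_upwards [ae_restrict_mem measurableSet_Ioo] with u hu
    have hpos := one_sub_sq_pos hu
    have hu1 : 0 < 1 - u := by linarith [hu.2]
    have hu2 : 0 < 1 + u := by linarith [hu.1]
    rw [norm_of_nonneg (by positivity)]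
    simp only [Pi.add_apply]
    rcases le_total 0 u with h | h
    · have := rpow_le_rpow_of_nonpos hu1 (show 1 - u ≤ 1 - u ^ 2 by nlinarith) h0.le
      have : 0 < (1 + u) ^ δ := by positivity
      linarith
    · have := rpow_le_rpow_of_nonpos hu2 (show 1 + u ≤ 1 - u ^ 2 by nlinarith) h0.le
      have : 0 < (1 - u) ^ δ := by positivity
      linarith

theorem hasDerivAt_PiFun (γ : ℝ) {u : ℝ} (hu : u ∈ Ioo (-1 : ℝ) 1) :
    HasDerivAt (PiFun γ)
      (Real.Gamma (γ + 1) / (√π * Real.Gamma (γ + 1/2)) * (1 - u ^ 2) ^ (γ - 1/2)) u := by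
  have hc : ∀ w ∈ Ioo (-1 : ℝ) 1, ContinuousAt (fun w : ℝ => (1 - w ^ 2) ^ (γ - 1/2)) w :=
    fun w hw => ContinuousAt.rpow_const (by fun_prop) (Or.inl (one_sub_sq_pos hw).ne')
  refine HasDerivAt.const_mul _ (intervalIntegral.integral_hasDerivAt_right ?_ ?_ (hc u hu))
  · refine ContinuousOn.intervalIntegrable fun w hw => (hc w ?_).continuousWithinAt
    exact (convex_Ioo (-1 : ℝ) 1).ordConnected.uIcc_subset (by simp) hu hw
  · exact (by fun_prop : StronglyMeasurable fun w : ℝ => (1 - w ^ 2) ^ (γ - 1/2))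
      |>.stronglyMeasurableAtFilter

theorem PiFun_neg (γ u : ℝ) : PiFun γ (-u) = -PiFun γ u := by
  have := intervalIntegral.integral_comp_neg (a := 0) (b := u)
    (fun w : ℝ => (1 - w ^ 2) ^ (γ - 1/2))
  simp only [neg_sq, neg_zero] at this
  rw [PiFun, PiFun, this, intervalIntegral.integral_symm]
  ring

theorem integral_one_sub_sq_rpow_nonneg_le {γ u : ℝ} (hγ : γ < -(1/2)) (h0 : 0 ≤ u) (h1 : u < 1) :
    |∫ w in (0 : ℝ)..u, (1 - w ^ 2) ^ (γ - 1/2)| ≤ (1 - u) ^ (γ + 1/2) / (-(γ + 1/2)) := by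
  have hm : ∀ w ∈ uIcc 0 u, 0 ≤ w ∧ w < 1 := by
    intro w hw
    rw [uIcc_of_le h0] at hw
    exact ⟨hw.1, hw.2.trans_lt h1⟩
  have hd : ∀ w ∈ uIcc 0 u, HasDerivAt (fun w : ℝ => (1 - w) ^ (γ + 1/2) / (-(γ + 1/2)))
      ((1 - w) ^ (γ - 1/2)) w := by
    intro w hw
    have := hm w hw
    have h2 := (((hasDerivAt_id w).const_sub 1).rpow_const (p := γ + 1/2)
      (Or.inl (by simp only [id]; linarith))).div_const (-(γ + 1/2))
    refine h2.congr_deriv ?_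
    have : γ + 1/2 ≠ 0 := by linarith
    simp only [id]
    rw [show γ + 1/2 - 1 = γ - 1/2 by ring, neg_one_mul, neg_mul, neg_div_neg_eq,
      mul_div_cancel_left₀ _ this]
  have hi1 : IntervalIntegrable (fun w : ℝ => (1 - w) ^ (γ - 1/2)) volume 0 u :=
    ContinuousOn.intervalIntegrable fun w hw => (ContinuousAt.rpow_const (by fun_prop)
      (Or.inl (by linarith [hm w hw]))).continuousWithinAt
  have hi2 : IntervalIntegrable (fun w : ℝ => (1 - w ^ 2) ^ (γ - 1/2)) volume 0 u :=
    ContinuousOn.intervalIntegrable fun w hw => (ContinuousAt.rpow_const (by fun_prop)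
      (Or.inl (by nlinarith [hm w hw]))).continuousWithinAt
  rw [abs_of_nonneg (intervalIntegral.integral_nonneg h0 fun w hw => rpow_nonneg
    (by nlinarith [hw.1, hw.2]) _)]
  refine (intervalIntegral.integral_mono_on h0 hi2 hi1 fun w hw => ?_).trans ?_
  · exact rpow_le_rpow_of_nonpos (by linarith [hw.2]) (by nlinarith [hw.1, hw.2]) (by linarith)
  · rw [intervalIntegral.integral_eq_sub_of_hasDerivAt hd hi1]
    have : 0 ≤ (1 - (0 : ℝ)) ^ (γ + 1/2) / (-(γ + 1/2)) := div_nonneg (by simp) (by linarith)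
    linarith

theorem exists_abs_PiFun_le {γ : ℝ} (hγ : γ < -(1/2)) :
    ∃ c, ∀ u ∈ Ioo (-1 : ℝ) 1, |PiFun γ u| ≤ c * (1 - u ^ 2) ^ (γ + 1/2) := by
  set κ := Real.Gamma (γ + 1) / (√π * Real.Gamma (γ + 1/2)) with hκ
  refine ⟨|κ| * ((2 : ℝ)⁻¹ ^ (γ + 1/2) / (-(γ + 1/2))), ?_⟩
  have key : ∀ u : ℝ, 0 ≤ u → u < 1 → |PiFun γ u| ≤
      |κ| * ((2 : ℝ)⁻¹ ^ (γ + 1/2) / (-(γ + 1/2))) * (1 - u ^ 2) ^ (γ + 1/2) := by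
    intro u h0 h1
    rw [PiFun, ← hκ, abs_mul, mul_assoc]
    refine mul_le_mul_of_nonneg_left ?_ (abs_nonneg _)
    refine (integral_one_sub_sq_rpow_nonneg_le hγ h0 h1).trans ?_
    rw [div_mul_eq_mul_div, ← mul_rpow (by norm_num) (by nlinarith)]
    refine div_le_div_of_nonneg_right ?_ (by linarith)
    exact rpow_le_rpow_of_nonpos (by nlinarith) (by nlinarith) (by linarith)
  intro u hu
  rcases le_total 0 u with h | h
  · exact key u h hu.2
  · have := key (-u) (by linarith) (by linarith [hu.1])
    rwa [PiFun_neg, abs_neg, neg_sq] at this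

theorem integrableOn_PiFun {γ : ℝ} (h1 : -1 < γ) (h2 : γ < -(1/2)) :
    IntegrableOn (PiFun γ) (Ioo (-1) 1) := by
  obtain ⟨c, hc⟩ := exists_abs_PiFun_le h2
  refine ((integrableOn_one_sub_sq_rpow (δ := γ + 1/2) (by linarith) (by linarith)).const_mul
    c).mono' ?_ ?_
  · exact ContinuousOn.aestronglyMeasurable
      (fun u hu => (hasDerivAt_PiFun γ hu).continuousAt.continuousWithinAt) measurableSet_Ioo
  · filter_upwards [ae_restrict_mem measurableSet_Ioo] with u hu using hc u hu

theorem integrableOn_pow_mul {w : ℝ → ℝ} (hw : IntegrableOn w (Ioo (-1) 1)) (n : ℕ) :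
    IntegrableOn (fun u => u ^ n * w u) (Ioo (-1) 1) := by
  refine Integrable.bdd_mul (c := 1) hw (by fun_prop) ?_
  filter_upwards [ae_restrict_mem measurableSet_Ioo] with u hu
  rw [norm_pow]
  exact pow_le_one₀ (norm_nonneg _) (abs_le.2 ⟨hu.1.le, hu.2.le⟩)

theorem integral_even_pow_mul_PiFun (γ : ℝ) (m : ℕ) :
    ∫ u in Ioo (-1 : ℝ) 1, u ^ (2 * m) * PiFun γ u = 0 := by
  rw [← integral_Ioc_eq_integral_Ioo, ← intervalIntegral.integral_of_le (by norm_num)]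
  have := intervalIntegral.integral_comp_neg (a := -1) (b := 1)
    (fun u => u ^ (2 * m) * PiFun γ u)
  simp only [(even_two_mul m).neg_pow, PiFun_neg, neg_neg, mul_neg,
    intervalIntegral.integral_neg] at this
  linarith

theorem integral_Ioo_pow_mul_one_sub_sq_rpow {δ : ℝ} (hδ : -1 < δ) (m : ℕ) :
    ∫ u in Ioo (-1 : ℝ) 1, u ^ (2 * m) * (1 - u ^ 2) ^ δ =
      Real.Gamma (m + 1/2) * Real.Gamma (δ + 1) / Real.Gamma (m + 1/2 + (δ + 1)) := by
  have habs : ∫ u in Ioo (-1 : ℝ) 1, u ^ (2 * m) * (1 - u ^ 2) ^ δ =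
      2 * ∫ u in Ioo (0 : ℝ) 1, u ^ (2 * m) * (1 - u ^ 2) ^ δ := by
    have h := integral_comp_abs (f := (Ioo (-1 : ℝ) 1).indicator
      fun u => u ^ (2 * m) * (1 - u ^ 2) ^ δ)
    rw [← integral_indicator measurableSet_Ioo]
    convert h using 1
    · congr 1
      ext u
      simp only [indicator, mem_Ioo, ← abs_lt, abs_abs, sq_abs, (even_two_mul m).pow_abs]
    · rw [setIntegral_indicator measurableSet_Ioo]
      congr 3
      ext u
      simp only [mem_Ioo, mem_inter_iff, mem_Ioi]
      constructor
      · rintro ⟨h1, h2⟩; exact ⟨h1, by linarith, h2⟩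
      · rintro ⟨h1, _, h2⟩; exact ⟨h1, h2⟩
  have himg : (fun u : ℝ => u ^ 2) '' Ioo 0 1 = Ioo 0 1 := by
    ext x
    constructor
    · rintro ⟨u, ⟨h1, h2⟩, rfl⟩
      exact ⟨by positivity, by simp only; nlinarith⟩
    · rintro ⟨h1, h2⟩
      exact ⟨√x, ⟨sqrt_pos.2 h1, (sqrt_lt' one_pos).2 (by simpa using h2)⟩, sq_sqrt h1.le⟩
  have hsub := integral_image_eq_integral_abs_deriv_smul (s := Ioo (0 : ℝ) 1)
    (f := fun u => u ^ 2) (f' := fun u => 2 * u) measurableSet_Ioo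
    (fun u _ => by simpa using (hasDerivAt_pow 2 u).hasDerivWithinAt)
    (fun u hu v hv h => (pow_left_inj₀ hu.1.le hv.1.le two_ne_zero).1 h)
    (fun x => x ^ ((m : ℝ) + 1/2 - 1) * (1 - x) ^ (δ + 1 - 1))
  rw [himg] at hsub
  have hbeta : ProbabilityTheory.beta (m + 1/2) (δ + 1) =
      ∫ x in Ioo (0 : ℝ) 1, x ^ ((m : ℝ) + 1/2 - 1) * (1 - x) ^ (δ + 1 - 1) := by
    rw [ProbabilityTheory.beta_eq_betaIntegralReal _ _ (by positivity) (by linarith),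
      Complex.betaIntegral, intervalIntegral.integral_of_le zero_le_one,
      integral_Ioc_eq_integral_Ioo]
    have : ∀ x ∈ Ioo (0 : ℝ) 1, (x : ℂ) ^ (((m + 1/2 : ℝ) : ℂ) - 1) *
        (1 - (x : ℂ)) ^ (((δ + 1 : ℝ) : ℂ) - 1) =
        ((x ^ ((m : ℝ) + 1/2 - 1) * (1 - x) ^ (δ + 1 - 1) : ℝ) : ℂ) := by
      intro x hx
      rw [Complex.ofReal_mul, Complex.ofReal_cpow hx.1.le, Complex.ofReal_cpow (by linarith [hx.2])]
      push_cast
      rfl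
    rw [setIntegral_congr_fun measurableSet_Ioo this]
    exact congrArg Complex.re integral_complex_ofReal
  rw [habs, ← ProbabilityTheory.beta, hbeta, hsub, ← integral_const_mul]
  refine setIntegral_congr_fun measurableSet_Ioo fun u hu => ?_
  have h0 : 0 < u := hu.1
  simp only [smul_eq_mul]
  rw [abs_of_pos (by positivity), ← rpow_natCast u 2, ← rpow_mul h0.le, ← rpow_natCast u (2 * m),
    add_sub_cancel_right, show u ^ ((2 * m : ℕ) : ℝ) = u * u ^ (((2 : ℕ) : ℝ) * ((m : ℝ) + 1/2 - 1)) by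
      nth_rw 2 [← rpow_one u]
      rw [← rpow_add h0]
      congr 1
      push_cast
      ring]
  ring

/-- The recurrence in `m` of `2 * m * ∫ u ^ (2 * m - 1) * PiFun γ u`. -/
theorem integral_odd_pow_mul_PiFun_succ_sub {γ : ℝ} (h1 : -1 < γ) (h2 : γ < -(1/2)) (m : ℕ) :
    ((2 * (m + 1) : ℕ) : ℝ) * (∫ u in Ioo (-1 : ℝ) 1, u ^ (2 * (m + 1) - 1) * PiFun γ u) -
      ((2 * m : ℕ) : ℝ) * (∫ u in Ioo (-1 : ℝ) 1, u ^ (2 * m - 1) * PiFun γ u) =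
    Real.Gamma (γ + 1) / (√π * Real.Gamma (γ + 1/2)) *
      ∫ u in Ioo (-1 : ℝ) 1, u ^ (2 * m) * (1 - u ^ 2) ^ (γ + 1/2) := by
  set κ := Real.Gamma (γ + 1) / (√π * Real.Gamma (γ + 1/2)) with hκ
  have hP := integrableOn_pow_mul (integrableOn_PiFun h1 h2)
  have hW := integrableOn_pow_mul
    (integrableOn_one_sub_sq_rpow (δ := γ + 1/2) (by linarith) (by linarith))
  set F' : ℝ → ℝ := fun u => ((2 * (m + 1) : ℕ) : ℝ) * (u ^ (2 * (m + 1) - 1) * PiFun γ u) -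
    ((2 * m : ℕ) : ℝ) * (u ^ (2 * m - 1) * PiFun γ u) -
    κ * (u ^ (2 * m) * (1 - u ^ 2) ^ (γ + 1/2)) with hF'
  have hint : IntegrableOn F' (Ioo (-1) 1) :=
    (((hP _).const_mul _).sub ((hP _).const_mul _)).sub ((hW _).const_mul _)
  have hderiv : ∀ u ∈ Ioo (-1 : ℝ) 1,
      HasDerivAt (fun u => (u ^ (2 * (m + 1)) - u ^ (2 * m)) * PiFun γ u) (F' u) u := by
    intro u hu
    have h := ((hasDerivAt_pow (2 * (m + 1)) u).sub (hasDerivAt_pow (2 * m) u)).mul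
      (hasDerivAt_PiFun γ hu)
    refine h.congr_deriv ?_
    have hr : (1 - u ^ 2) ^ (γ + 1/2) = (1 - u ^ 2) ^ (γ - 1/2) * (1 - u ^ 2) := by
      rw [← rpow_add_one (one_sub_sq_pos hu).ne']
      congr 1
      ring
    simp only [hF', hr, Pi.sub_apply, ← hκ]
    ring
  obtain ⟨c, hc⟩ := exists_abs_PiFun_le h2
  have hbound : ∀ u ∈ Ioo (-1 : ℝ) 1,
      ‖(u ^ (2 * (m + 1)) - u ^ (2 * m)) * PiFun γ u‖ ≤ c * (1 - u ^ 2) ^ (γ + 1/2 + 1) := by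
    intro u hu
    have hp := one_sub_sq_pos hu
    rw [show (u ^ (2 * (m + 1)) - u ^ (2 * m)) * PiFun γ u =
      -(u ^ (2 * m) * ((1 - u ^ 2) * PiFun γ u)) by ring, norm_neg, norm_mul, norm_mul, norm_pow,
      norm_of_nonneg hp.le, rpow_add_one hp.ne', norm_eq_abs, norm_eq_abs]
    have hle : |u| ^ (2 * m) ≤ 1 := pow_le_one₀ (abs_nonneg _) (abs_le.2 ⟨hu.1.le, hu.2.le⟩)
    calc |u| ^ (2 * m) * ((1 - u ^ 2) * |PiFun γ u|)
        ≤ 1 * ((1 - u ^ 2) * (c * (1 - u ^ 2) ^ (γ + 1/2))) := by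
          gcongr
          exact hc u hu
      _ = _ := by ring
  have hlim : ∀ x : ℝ, x ^ 2 = 1 →
      Filter.Tendsto (fun u : ℝ => c * (1 - u ^ 2) ^ (γ + 1/2 + 1)) (nhds x) (nhds 0) := by
    intro x hx
    have h : ContinuousAt (fun u : ℝ => c * (1 - u ^ 2) ^ (γ + 1/2 + 1)) x :=
      ContinuousAt.mul continuousAt_const
        (ContinuousAt.rpow_const (by fun_prop) (Or.inr (by linarith)))
    have h0 := h.tendsto
    simp only [hx, sub_self] at h0
    rwa [zero_rpow (by linarith), mul_zero] at h0
  have hFTC := intervalIntegral.integral_eq_sub_of_hasDerivAt_of_tendsto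
    (show (-1 : ℝ) < 1 by norm_num) hderiv
    ((intervalIntegrable_iff_integrableOn_Ioo_of_le (by norm_num)).2 hint)
    (squeeze_zero_norm' (by
      filter_upwards [Ioo_mem_nhdsGT (show (-1 : ℝ) < 1 by norm_num)] with u hu using hbound u hu)
      ((hlim (-1) (by norm_num)).mono_left nhdsWithin_le_nhds))
    (squeeze_zero_norm' (by
      filter_upwards [Ioo_mem_nhdsLT (show (-1 : ℝ) < 1 by norm_num)] with u hu using hbound u hu)
      ((hlim 1 (by norm_num)).mono_left nhdsWithin_le_nhds))
  have hsplit := integral_sub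
    (((hP (2 * (m + 1) - 1)).const_mul ((2 * (m + 1) : ℕ) : ℝ)).sub
      ((hP (2 * m - 1)).const_mul ((2 * m : ℕ) : ℝ))) ((hW (2 * m)).const_mul κ)
  have hsplit' := integral_sub ((hP (2 * (m + 1) - 1)).const_mul ((2 * (m + 1) : ℕ) : ℝ))
    ((hP (2 * m - 1)).const_mul ((2 * m : ℕ) : ℝ))
  simp only [integral_const_mul, Pi.sub_apply] at hsplit hsplit'
  rw [intervalIntegral.integral_of_le (by norm_num), integral_Ioc_eq_integral_Ioo, hF',
    hsplit, hsplit'] at hFTC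
  linarith

theorem Gamma_add_natCast {x : ℝ} (hx : 0 < x) (n : ℕ) :
    Real.Gamma (x + n) = (ascPochhammer ℝ n).eval x * Real.Gamma x := by
  induction n with
  | zero => simp
  | succ n ih =>
    rw [Nat.cast_succ, ← add_assoc, Real.Gamma_add_one (by positivity), ih,
      ascPochhammer_succ_eval]
    ring

theorem ascPochhammer_eval_two_mul (x : ℝ) (k : ℕ) :
    (ascPochhammer ℝ (2 * k)).eval x =
      4 ^ k * (ascPochhammer ℝ k).eval (x / 2) * (ascPochhammer ℝ k).eval ((x + 1) / 2) := by
  induction k with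
  | zero => simp
  | succ k ih =>
    rw [show 2 * (k + 1) = 2 * k + 1 + 1 by ring, ascPochhammer_succ_eval, ascPochhammer_succ_eval,
      ih, ascPochhammer_succ_eval, ascPochhammer_succ_eval]
    push_cast
    ring

theorem factorial_two_mul_eq (k : ℕ) :
    ((2 * k).factorial : ℝ) = 4 ^ k * (ascPochhammer ℝ k).eval (1/2) * k.factorial := by
  have h := ascPochhammer_eval_two_mul 1 k
  norm_num [ascPochhammer_eval_one] at h
  exact h

/-- The value at `u ^ j` of the continuation in `γ` of the functional
`f ↦ ∫ f dΠ_γ` to `-1 < γ < -1/2`. -/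
noncomputable def jacobiMoment (γ : ℝ) (j : ℕ) : ℝ :=
  ((-1) ^ j + 1 ^ j) / 2 - j * ∫ u in Ioo (-1 : ℝ) 1, u ^ (j - 1) * PiFun γ u

theorem jacobiMoment_of_odd (γ : ℝ) {j : ℕ} (hj : Odd j) : jacobiMoment γ j = 0 := by
  obtain ⟨m, rfl⟩ := hj
  rw [jacobiMoment, Nat.add_sub_cancel, integral_even_pow_mul_PiFun]
  simp [pow_succ, pow_mul]

theorem jacobiMoment_two_mul {γ : ℝ} (h1 : -1 < γ) (h2 : γ < -(1/2)) (m : ℕ) :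
    jacobiMoment γ (2 * m) =
      (ascPochhammer ℝ m).eval (1/2) / (ascPochhammer ℝ m).eval (γ + 1) := by
  induction m with
  | zero => simp [jacobiMoment]
  | succ m ih =>
    have hrec := integral_odd_pow_mul_PiFun_succ_sub h1 h2 m
    rw [integral_Ioo_pow_mul_one_sub_sq_rpow (by linarith)] at hrec
    have hstep : jacobiMoment γ (2 * (m + 1)) = jacobiMoment γ (2 * m) -
        Real.Gamma (γ + 1) / (√π * Real.Gamma (γ + 1/2)) *
          (Real.Gamma (m + 1/2) * Real.Gamma (γ + 1/2 + 1) /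
            Real.Gamma (m + 1/2 + (γ + 1/2 + 1))) := by
      rw [← hrec, jacobiMoment, jacobiMoment]
      simp only [pow_mul, neg_one_sq, one_pow]
      ring
    have hG0 : Real.Gamma (γ + 1/2) ≠ 0 := by
      have h := Real.Gamma_add_one (s := γ + 1/2) (by linarith)
      have hp := Real.Gamma_pos_of_pos (show 0 < γ + 1/2 + 1 by linarith)
      intro h0
      rw [h, h0, mul_zero] at hp
      exact hp.false
    have hG1 := (Real.Gamma_pos_of_pos (show 0 < γ + 1 by linarith)).ne'
    have hpi : √π ≠ 0 := (sqrt_pos.2 pi_pos).ne'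
    have hP := (ascPochhammer_pos (S := ℝ) m (γ + 1) (by linarith)).ne'
    have hm : γ + 1 + m ≠ 0 := by have : (0 : ℝ) ≤ m := m.cast_nonneg; linarith
    have hb : (m : ℝ) + 1/2 + (γ + 1/2 + 1) = γ + 1 + (m + 1 : ℕ) := by push_cast; ring
    rw [hstep, ih, Real.Gamma_add_one (s := γ + 1/2) (by linarith), hb, add_comm (m : ℝ) (1/2), Gamma_add_natCast (by norm_num), Gamma_add_natCast (by linarith),
      Real.Gamma_one_half_eq, ascPochhammer_succ_eval, ascPochhammer_succ_eval]
    generalize Real.Gamma (γ + 1/2) = G at hG0 ⊢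
    field_simp
    ring

theorem hasSum_mul_integral_pow_mul {ι : Type*} [Countable ι] {c : ι → ℝ} {n : ι → ℕ}
    {h w : ℝ → ℝ} (hc : Summable fun i => |c i|) (hw : IntegrableOn w (Ioo (-1) 1))
    (hsum : ∀ u ∈ Ioo (-1 : ℝ) 1, HasSum (fun i => c i * u ^ n i) (h u)) :
    HasSum (fun i => c i * ∫ u in Ioo (-1 : ℝ) 1, u ^ n i * w u)
      (∫ u in Ioo (-1 : ℝ) 1, h u * w u) := by
  have hint : ∀ i, IntegrableOn (fun u => c i * (u ^ n i * w u)) (Ioo (-1) 1) :=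
    fun i => (integrableOn_pow_mul hw _).const_mul _
  have key := hasSum_integral_of_summable_integral_norm hint ?_
  · simp only [integral_const_mul] at key
    rwa [show ∫ u in Ioo (-1 : ℝ) 1, h u * w u =
      ∫ u in Ioo (-1 : ℝ) 1, ∑' i, c i * (u ^ n i * w u) from ?_]
    refine setIntegral_congr_fun measurableSet_Ioo fun u hu => ?_
    rw [← ((hsum u hu).mul_right (w u)).tsum_eq]
    exact tsum_congr fun i => mul_assoc _ _ _
  · refine Summable.of_nonneg_of_le (fun i => integral_nonneg fun _ => norm_nonneg _) (fun i => ?_)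
      (hc.mul_right (∫ u in Ioo (-1 : ℝ) 1, |w u|))
    rw [← integral_const_mul]
    refine setIntegral_mono_on (hint i).norm (hw.abs.const_mul _) measurableSet_Ioo fun u hu => ?_
    rw [norm_mul, norm_mul, norm_pow, norm_eq_abs, norm_eq_abs, norm_eq_abs]
    have : |u| ^ n i ≤ 1 := pow_le_one₀ (abs_nonneg _) (abs_le.2 ⟨hu.1.le, hu.2.le⟩)
    have := mul_le_mul_of_nonneg_right this (abs_nonneg (w u))
    gcongr
    linarith

theorem abs_pow_le_one {v : ℝ} (hv : |v| ≤ 1) (n : ℕ) : |v ^ n| ≤ 1 := by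
  rw [abs_pow]
  exact pow_le_one₀ (abs_nonneg _) hv

theorem hasSum_jacobiMoment {C a b μ α β : ℝ} (hμ : 0 < μ) (ha : 0 ≤ a) (hb : 0 ≤ b)
    (hC : a + b < C) (hα₁ : -1 < α) (hα₂ : α < -(1/2)) (hβ₁ : -1 < β) (hβ₂ : β < -(1/2)) :
    HasSum (fun p => expCoeff C a b μ p * (jacobiMoment α p.1 * jacobiMoment β p.2))
      ((∫ v in Ioo (-1 : ℝ) 1, (∫ u in Ioo (-1 : ℝ) 1,
          μ * (μ + 1) * a * b * (C - a * u - b * v) ^ (-(μ + 2)) * PiFun α u) * PiFun β v)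
      - ((∫ u in Ioo (-1 : ℝ) 1, μ * a * (C - a * u - b * (-1)) ^ (-(μ + 1)) * PiFun α u)
        + ∫ u in Ioo (-1 : ℝ) 1, μ * a * (C - a * u - b * 1) ^ (-(μ + 1)) * PiFun α u) / 2
      - (∫ v in Ioo (-1 : ℝ) 1, (μ * b * (C - a * (-1) - b * v) ^ (-(μ + 1))
          + μ * b * (C - a * 1 - b * v) ^ (-(μ + 1))) / 2 * PiFun β v)
      + (((C - a * (-1) - b * (-1)) ^ (-μ) + (C - a * 1 - b * (-1)) ^ (-μ)) / 2
        + ((C - a * (-1) - b * 1) ^ (-μ) + (C - a * 1 - b * 1) ^ (-μ)) / 2) / 2) := by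
  have hPα := integrableOn_PiFun hα₁ hα₂
  have hPβ := integrableOn_PiFun hβ₁ hβ₂
  have one : |(1 : ℝ)| ≤ 1 := by simp
  have neg : |(-1 : ℝ)| ≤ 1 := by simp
  have hIoo : ∀ {u : ℝ}, u ∈ Ioo (-1 : ℝ) 1 → |u| ≤ 1 := fun hu => abs_le.2 ⟨hu.1.le, hu.2.le⟩
  have hA := expCoeff_nonneg hμ ha hb hC
  have s10 := (hasSum_expCoeff_deriv_left hμ ha hb hC one one).summable
  have s01 := (hasSum_expCoeff_deriv_right hμ ha hb hC one one).summable
  have s11 := (hasSum_expCoeff_deriv_both hμ ha hb hC one one).summable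
  simp only [one_pow, mul_one, one_mul] at s10 s01 s11
  have t1in : ∀ v ∈ Ioo (-1 : ℝ) 1, HasSum (fun p => (expCoeff C a b μ p *
      (p.1 * (p.2 * v ^ (p.2 - 1)))) * ∫ u in Ioo (-1 : ℝ) 1, u ^ (p.1 - 1) * PiFun α u)
      (∫ u in Ioo (-1 : ℝ) 1,
        μ * (μ + 1) * a * b * (C - a * u - b * v) ^ (-(μ + 2)) * PiFun α u) := by
    intro v hv
    refine hasSum_mul_integral_pow_mul ?_ hPα fun u hu => ?_
    · refine Summable.of_nonneg_of_le (fun p => abs_nonneg _) (fun p => ?_) s11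
      rw [abs_mul, abs_mul, abs_mul, Nat.abs_cast, Nat.abs_cast, abs_of_nonneg (hA p)]
      have := hA p
      gcongr
      exact mul_le_of_le_one_right (by positivity) (abs_pow_le_one (hIoo hv) _)
    · exact (hasSum_expCoeff_deriv_both hμ ha hb hC (hIoo hu) (hIoo hv)).congr_fun
        fun p => by ring
  have t1 := hasSum_mul_integral_pow_mul
    (c := fun p => expCoeff C a b μ p *
      (p.1 * p.2 * ∫ u in Ioo (-1 : ℝ) 1, u ^ (p.1 - 1) * PiFun α u))
    (n := fun p : ℕ × ℕ => p.2 - 1) (w := PiFun β) ?_ hPβ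
    (fun v hv => (t1in v hv).congr_fun fun p => by ring)
  swap
  · refine Summable.of_nonneg_of_le (fun p => abs_nonneg _) (fun p => ?_)
      (s11.mul_right (∫ u in Ioo (-1 : ℝ) 1, |PiFun α u|))
    rw [abs_mul, abs_mul, abs_mul, Nat.abs_cast, Nat.abs_cast, abs_of_nonneg (hA p), ← mul_assoc]
    have := hA p
    gcongr
    refine (abs_integral_le_integral_abs).trans ?_
    refine setIntegral_mono_on (integrableOn_pow_mul hPα _).abs hPα.abs measurableSet_Ioo
      fun u hu => ?_
    rw [abs_mul]
    exact mul_le_of_le_one_left (abs_nonneg _) (abs_pow_le_one (hIoo hu) _)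
  have t2 : ∀ v : ℝ, |v| ≤ 1 → HasSum (fun p => (expCoeff C a b μ p *
      (p.1 * v ^ p.2)) * ∫ u in Ioo (-1 : ℝ) 1, u ^ (p.1 - 1) * PiFun α u)
      (∫ u in Ioo (-1 : ℝ) 1, μ * a * (C - a * u - b * v) ^ (-(μ + 1)) * PiFun α u) := by
    intro v hv
    refine hasSum_mul_integral_pow_mul ?_ hPα fun u hu => ?_
    · refine Summable.of_nonneg_of_le (fun p => abs_nonneg _) (fun p => ?_) s10
      rw [abs_mul, abs_mul, Nat.abs_cast, abs_of_nonneg (hA p)]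
      have := hA p
      gcongr
      exact mul_le_of_le_one_right (by positivity) (abs_pow_le_one hv _)
    · exact (hasSum_expCoeff_deriv_left hμ ha hb hC (hIoo hu) hv).congr_fun fun p => by ring
  have t3 := hasSum_mul_integral_pow_mul
    (c := fun p => expCoeff C a b μ p * ((((-1) ^ p.1 + 1 ^ p.1) / 2) * p.2))
    (n := fun p : ℕ × ℕ => p.2 - 1) (w := PiFun β)
    (h := fun v => (μ * b * (C - a * (-1) - b * v) ^ (-(μ + 1))
          + μ * b * (C - a * 1 - b * v) ^ (-(μ + 1))) / 2) ?_ hPβ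
    (fun v hv => (((hasSum_expCoeff_deriv_right hμ ha hb hC neg (hIoo hv)).add
      (hasSum_expCoeff_deriv_right hμ ha hb hC one (hIoo hv))).div_const 2).congr_fun
        fun p => by ring)
  swap
  · refine Summable.of_nonneg_of_le (fun p => abs_nonneg _) (fun p => ?_) s01
    rw [abs_mul, abs_mul, Nat.abs_cast, abs_of_nonneg (hA p)]
    have := hA p
    gcongr
    refine mul_le_of_le_one_left (by positivity) ?_
    have h1 := abs_le.1 (abs_pow_le_one neg p.1)
    rw [one_pow, abs_le]
    constructor <;> linarith [h1.1, h1.2]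
  have t4 := fun u v (hu : |u| ≤ 1) (hv : |v| ≤ 1) => hasSum_expCoeff hμ ha hb hC hu hv
  have total := ((t1.sub (((t2 (-1) neg).add (t2 1 one)).div_const 2)).sub t3).add
    (((((t4 (-1) (-1) neg neg).add (t4 1 (-1) one neg)).div_const 2).add
      (((t4 (-1) 1 neg one).add (t4 1 1 one one)).div_const 2)).div_const 2)
  refine total.congr_fun fun p => ?_
  simp only [jacobiMoment]
  ring

theorem hasDerivAt_rpow_left {C a b μ u v : ℝ} (h : 0 < C - a * u - b * v) :
    HasDerivAt (fun u => (C - a * u - b * v) ^ (-μ))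
      (μ * a * (C - a * u - b * v) ^ (-(μ + 1))) u := by
  have h1 := ((((hasDerivAt_id u).const_mul a).const_sub C).sub_const (b * v)).rpow_const
    (p := -μ) (Or.inl h.ne')
  refine h1.congr_deriv ?_
  simp only [id]
  rw [show -μ - 1 = -(μ + 1) by ring]
  ring

theorem hasDerivAt_rpow_right {C a b μ u v : ℝ} (h : 0 < C - a * u - b * v) :
    HasDerivAt (fun v => (C - a * u - b * v) ^ (-μ))
      (μ * b * (C - a * u - b * v) ^ (-(μ + 1))) v := by
  have h1 := (((hasDerivAt_id v).const_mul b).const_sub (C - a * u)).rpow_const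
    (p := -μ) (Or.inl h.ne')
  refine h1.congr_deriv ?_
  simp only [id]
  rw [show -μ - 1 = -(μ + 1) by ring]
  ring

theorem integral_PiMeas_neg_half (f : ℝ → ℝ) :
    ∫ u, f u ∂(PiMeas (-(1/2))) = (f (-1) + f 1) / 2 := by
  have hd : ∀ x : ℝ, Integrable f (Measure.dirac x) := fun x => integrable_dirac (by simp)
  rw [PiMeas, if_pos rfl, integral_smul_measure, integral_add_measure (hd _) (hd _),
    integral_dirac, integral_dirac]
  simp
  ring

theorem expCoeff_mul_jacobiMoment {C a b α β : ℝ} (hα₁ : -1 < α) (hα₂ : α < -(1/2))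
    (hβ₁ : -1 < β) (hβ₂ : β < -(1/2)) (m n : ℕ) :
    expCoeff C a b (α + β + 2) (2 * m, 2 * n) *
      (jacobiMoment α (2 * m) * jacobiMoment β (2 * n)) =
    C ^ (-(α + β + 2)) *
      ((Polynomial.eval ((α + β + 2) / 2) (ascPochhammer ℝ (m + n)) *
        Polynomial.eval ((α + β + 3) / 2) (ascPochhammer ℝ (m + n))) /
      (Polynomial.eval (α + 1) (ascPochhammer ℝ m) * Polynomial.eval (β + 1) (ascPochhammer ℝ n) *
        (Nat.factorial m) * (Nat.factorial n)) * ((a / C) ^ 2) ^ m * ((b / C) ^ 2) ^ n) := by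
  rw [jacobiMoment_two_mul hα₁ hα₂, jacobiMoment_two_mul hβ₁ hβ₂, expCoeff]
  simp only
  rw [← mul_add, ascPochhammer_eval_two_mul, factorial_two_mul_eq, factorial_two_mul_eq,
    show α + β + 2 + 1 = α + β + 3 by ring, pow_mul, pow_mul]
  have h1 := (ascPochhammer_pos (S := ℝ) m (α + 1) (by linarith)).ne'
  have h2 := (ascPochhammer_pos (S := ℝ) n (β + 1) (by linarith)).ne'
  have h3 := (ascPochhammer_pos (S := ℝ) m (1/2) (by norm_num)).ne'
  have h4 := (ascPochhammer_pos (S := ℝ) n (1/2) (by norm_num)).ne'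
  have h5 : (m.factorial : ℝ) ≠ 0 := by positivity
  have h6 : (n.factorial : ℝ) ≠ 0 := by positivity
  rw [pow_add]
  field_simp

theorem hasSum_expCoeff_mul_jacobiMoment_F4 {C a b α β s : ℝ} (hα₁ : -1 < α) (hα₂ : α < -(1/2))
    (hβ₁ : -1 < β) (hβ₂ : β < -(1/2))
    (h : HasSum (fun p => expCoeff C a b (α + β + 2) p *
      (jacobiMoment α p.1 * jacobiMoment β p.2)) s) :
    s = C ^ (-(α + β + 2)) * F4 ((α + β + 2) / 2) ((α + β + 3) / 2) (α + 1) (β + 1)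
      ((a / C) ^ 2) ((b / C) ^ 2) := by
  have hi : Function.Injective (fun p : ℕ × ℕ => (2 * p.1, 2 * p.2)) := by
    intro p q h; simp only [Prod.mk.injEq] at h; ext <;> lia
  rw [← hi.hasSum_iff] at h
  · rw [F4, ← tsum_mul_left, ← h.tsum_eq]
    exact tsum_congr fun p => expCoeff_mul_jacobiMoment hα₁ hα₂ hβ₁ hβ₂ p.1 p.2
  · rintro ⟨j, l⟩ hjl
    rcases Nat.even_or_odd' j with ⟨m, rfl | rfl⟩
    · rcases Nat.even_or_odd' l with ⟨n, rfl | rfl⟩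
      · exact (hjl ⟨(m, n), rfl⟩).elim
      · simp [jacobiMoment_of_odd β (odd_two_mul_add_one n)]
    · simp [jacobiMoment_of_odd α (odd_two_mul_add_one m)]

theorem jacobi_poisson_representation_low_both (α β : ℝ)
    (hα₁ : -1 < α) (hα₂ : α < -(1/2)) (hβ₁ : -1 < β) (hβ₂ : β < -(1/2))
    (t : ℝ) (ht : 0 < t) (θ φ : ℝ) (hθ : θ ∈ Icc (0 : ℝ) π) (hφ : φ ∈ Icc (0 : ℝ) π) :
    Hker α β t θ φ =
      (∫ v in Ioo (-1 : ℝ) 1, (∫ u in Ioo (-1 : ℝ) 1,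
          (deriv (fun u' => deriv (fun v' => Psi α β t θ φ u' v') v) u) * PiFun α u)
          * PiFun β v)
      + (∫ v, (∫ u in Ioo (-1 : ℝ) 1,
          (-(deriv (fun u' => Psi α β t θ φ u' v) u)) * PiFun α u) ∂(PiMeas (-(1/2))))
      + (∫ v in Ioo (-1 : ℝ) 1,
          (∫ u, (-(deriv (fun v' => Psi α β t θ φ u v') v)) ∂(PiMeas (-(1/2)))) * PiFun β v)
      + ∫ v, (∫ u, Psi α β t θ φ u v ∂(PiMeas (-(1/2)))) ∂(PiMeas (-(1/2))) := by
  set C := Real.cosh (t / 2) with hCdef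
  set a := Real.sin (θ / 2) * Real.sin (φ / 2) with hadef
  set b := Real.cos (θ / 2) * Real.cos (φ / 2) with hbdef
  set K := cab α β * Real.sinh (t / 2) with hK
  have ha : 0 ≤ a := mul_nonneg
    (sin_nonneg_of_nonneg_of_le_pi (by linarith [hθ.1]) (by linarith [hθ.1, hθ.2]))
    (sin_nonneg_of_nonneg_of_le_pi (by linarith [hφ.1]) (by linarith [hφ.1, hφ.2]))
  have hb : 0 ≤ b := mul_nonneg
    (cos_nonneg_of_neg_pi_div_two_le_of_le (by linarith [hθ.1, pi_pos]) (by linarith [hθ.2]))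
    (cos_nonneg_of_neg_pi_div_two_le_of_le (by linarith [hφ.1, pi_pos]) (by linarith [hφ.2]))
  have hC : a + b < C := by
    have h1 : a + b ≤ 1 := by
      rw [add_comm, hadef, hbdef, ← cos_sub]
      exact cos_le_one _
    exact h1.trans_lt (Real.one_lt_cosh.2 (by positivity))
  have hμ : 0 < α + β + 2 := by linarith
  have one : |(1 : ℝ)| ≤ 1 := by simp
  have neg : |(-1 : ℝ)| ≤ 1 := by simp
  have hIoo : ∀ {u : ℝ}, u ∈ Ioo (-1 : ℝ) 1 → |u| ≤ 1 := fun hu => abs_le.2 ⟨hu.1.le, hu.2.le⟩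
  have hpos := fun u v (hu : |u| ≤ 1) (hv : |v| ≤ 1) => sub_mul_sub_mul_pos ha hb hC hu hv
  have hPsi : ∀ u v : ℝ, |u| ≤ 1 → |v| ≤ 1 →
      Psi α β t θ φ u v = K * (C - a * u - b * v) ^ (-(α + β + 2)) := by
    intro u v hu hv
    have h := hpos u v hu hv
    rw [rpow_neg h.le, ← div_eq_mul_inv, Psi, qf, ← hK, ← hCdef]
    congr 2
    rw [hadef, hbdef]
    ring
  have hdu : ∀ u ∈ Ioo (-1 : ℝ) 1, ∀ v : ℝ, |v| ≤ 1 → deriv (fun u' => Psi α β t θ φ u' v) u =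
      K * ((α + β + 2) * a * (C - a * u - b * v) ^ (-(α + β + 2 + 1))) := by
    intro u hu v hv
    refine (((hasDerivAt_rpow_left (hpos u v (hIoo hu) hv)).const_mul K).congr_of_eventuallyEq
      ?_).deriv
    filter_upwards [Ioo_mem_nhds hu.1 hu.2] with x hx using hPsi x v (hIoo hx) hv
  have hdv : ∀ v ∈ Ioo (-1 : ℝ) 1, ∀ u : ℝ, |u| ≤ 1 → deriv (fun v' => Psi α β t θ φ u v') v =
      K * ((α + β + 2) * b * (C - a * u - b * v) ^ (-(α + β + 2 + 1))) := by
    intro v hv u hu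
    refine (((hasDerivAt_rpow_right (hpos u v hu (hIoo hv))).const_mul K).congr_of_eventuallyEq
      ?_).deriv
    filter_upwards [Ioo_mem_nhds hv.1 hv.2] with x hx using hPsi u x hu (hIoo hx)
  have hduv : ∀ v ∈ Ioo (-1 : ℝ) 1, ∀ u ∈ Ioo (-1 : ℝ) 1,
      deriv (fun u' => deriv (fun v' => Psi α β t θ φ u' v') v) u =
      K * ((α + β + 2) * (α + β + 2 + 1) * a * b *
        (C - a * u - b * v) ^ (-(α + β + 2 + 2))) := by
    intro v hv u hu
    have h := ((((hasDerivAt_rpow_left (μ := α + β + 2 + 1)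
      (hpos u v (hIoo hu) (hIoo hv))).const_mul ((α + β + 2) * b)).const_mul
        K).congr_of_eventuallyEq (f₁ := fun u' => deriv (fun v' => Psi α β t θ φ u' v') v) (by
          filter_upwards [Ioo_mem_nhds hu.1 hu.2] with x hx using hdv v hv x (hIoo hx))).deriv
    rw [h, show α + β + 2 + 1 + 1 = α + β + 2 + 2 by ring]
    ring
  have hmain := hasSum_expCoeff_mul_jacobiMoment_F4 hα₁ hα₂ hβ₁ hβ₂
    (hasSum_jacobiMoment hμ ha hb hC hα₁ hα₂ hβ₁ hβ₂)
  have hH : Hker α β t θ φ = K * (C ^ (-(α + β + 2)) *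
      F4 ((α + β + 2) / 2) ((α + β + 3) / 2) (α + 1) (β + 1) ((a / C) ^ 2) ((b / C) ^ 2)) := by
    rw [rpow_neg (by linarith), Hker, ← hK, ← hCdef, ← hadef, ← hbdef]
    ring
  have e1 : (∫ v in Ioo (-1 : ℝ) 1, (∫ u in Ioo (-1 : ℝ) 1,
      (deriv (fun u' => deriv (fun v' => Psi α β t θ φ u' v') v) u) * PiFun α u) * PiFun β v) =
      K * ∫ v in Ioo (-1 : ℝ) 1, (∫ u in Ioo (-1 : ℝ) 1, (α + β + 2) * (α + β + 2 + 1) * a * b *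
        (C - a * u - b * v) ^ (-(α + β + 2 + 2)) * PiFun α u) * PiFun β v := by
    rw [← integral_const_mul]
    refine setIntegral_congr_fun measurableSet_Ioo fun v hv => ?_
    rw [← mul_assoc, ← integral_const_mul]
    congr 1
    refine setIntegral_congr_fun measurableSet_Ioo fun u hu => ?_
    rw [hduv v hv u hu, mul_assoc K]
  have e2 : ∀ v : ℝ, |v| ≤ 1 → (∫ u in Ioo (-1 : ℝ) 1,
      (-(deriv (fun u' => Psi α β t θ φ u' v) u)) * PiFun α u) =
      -K * ∫ u in Ioo (-1 : ℝ) 1,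
        (α + β + 2) * a * (C - a * u - b * v) ^ (-(α + β + 2 + 1)) * PiFun α u := by
    intro v hv
    rw [← integral_const_mul]
    refine setIntegral_congr_fun measurableSet_Ioo fun u hu => ?_
    rw [hdu u hu v hv]
    ring
  have e3 : (∫ v in Ioo (-1 : ℝ) 1,
      (∫ u, (-(deriv (fun v' => Psi α β t θ φ u v') v)) ∂(PiMeas (-(1/2)))) * PiFun β v) =
      -K * ∫ v in Ioo (-1 : ℝ) 1,
        ((α + β + 2) * b * (C - a * (-1) - b * v) ^ (-(α + β + 2 + 1))
          + (α + β + 2) * b * (C - a * 1 - b * v) ^ (-(α + β + 2 + 1))) / 2 * PiFun β v := by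
    rw [← integral_const_mul]
    refine setIntegral_congr_fun measurableSet_Ioo fun v hv => ?_
    rw [integral_PiMeas_neg_half, hdv v hv _ neg, hdv v hv _ one]
    ring
  rw [hH, ← hmain, e1, e3, integral_PiMeas_neg_half, e2 _ neg, e2 _ one, integral_PiMeas_neg_half,
    integral_PiMeas_neg_half, integral_PiMeas_neg_half, hPsi _ _ neg neg, hPsi _ _ one neg,
    hPsi _ _ neg one, hPsi _ _ one one]
  ring
end

section
/- Let α, β > -1 and let ξ₁, ξ₂, κ₁, κ₂ ≥ 0 be such that α+ξ₁+κ₁ ≥ -1/2 and β+ξ₂+κ₂ ≥ -1/2. Then there exists a constant C (depending only on α, β, ξ₁, ξ₂, κ₁, κ₂) such that for all θ, φ ∈ [0,π] with θ ≠ φ: (sin(θ/2)+sin(φ/2))^{2ξ₁} (cos(θ/2)+cos(φ/2))^{2ξ₂} ∫∫_{[-1,1]²} q(θ,φ,u,v)^{-(α+β+ξ₁+ξ₂+3/2)} dΠ_{α+ξ₁+κ₁}(u) dΠ_{β+ξ₂+κ₂}(v) ≤ C / μ_{α,β}(B(θ,|θ−φ|)), and (sin(θ/2)+sin(φ/2))^{2ξ₁}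 (cos(θ/2)+cos(φ/2))^{2ξ₂} ∫∫_{[-1,1]²} q(θ,φ,u,v)^{-(α+β+ξ₁+ξ₂+2)} dΠ_{α+ξ₁+κ₁}(u) dΠ_{β+ξ₂+κ₂}(v) ≤ C / (|θ−φ| μ_{α,β}(B(θ,|θ−φ|))). -/
open MeasureTheory Real Set
open scoped ENNReal Classical

/-- A power of a positive number changes by at most a constant factor when the base does. -/
lemma rpow_le_of_comparable {A x y : ℝ} (p : ℝ) (hA : 0 < A) (hx : 0 < x) (hy : 0 < y)
    (hxy : x ≤ A * y) (hyx : y ≤ A * x) : x ^ p ≤ A ^ |p| * y ^ p := by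
  rcases le_total 0 p with hp | hp
  · rw [abs_of_nonneg hp, ← mul_rpow hA.le hy.le]
    exact rpow_le_rpow hx.le hxy hp
  · rw [abs_of_nonpos hp]
    have h : (A * x) ^ p ≤ y ^ p := rpow_le_rpow_of_nonpos hy hyx hp
    rw [mul_rpow hA.le hx.le] at h
    calc x ^ p = A ^ (-p) * (A ^ p * x ^ p) := by
          rw [← mul_assoc, ← rpow_add hA]; simp
      _ ≤ A ^ (-p) * y ^ p := by gcongr

lemma lintegral_rpow_Ioc_le {p : ℝ} (hp : -1 < p) : ∃ K : ℝ, 0 < K ∧ ∀ x y : ℝ, 0 ≤ x → x ≤ y →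
    0 < y → ∫⁻ t in Ioc x y, ENNReal.ofReal (t ^ p) ≤ ENNReal.ofReal (K * (y ^ p * (y - x))) := by
  have hp1 : 0 < p + 1 := by linarith
  refine ⟨1 + 1 / (p + 1), by positivity, fun x y hx hxy hy => ?_⟩
  have hyp : 0 < y ^ p := rpow_pos_of_pos hy p
  have hnn : 0 ≤ y ^ p * (y - x) := mul_nonneg hyp.le (by linarith)
  rcases le_total 0 p with hp0 | hp0
  · calc ∫⁻ t in Ioc x y, ENNReal.ofReal (t ^ p)
        ≤ ∫⁻ _ in Ioc x y, ENNReal.ofReal (y ^ p) :=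
          setLIntegral_mono' measurableSet_Ioc fun t ht =>
            ENNReal.ofReal_le_ofReal (rpow_le_rpow (hx.trans ht.1.le) ht.2 hp0)
      _ = ENNReal.ofReal (y ^ p * (y - x)) := by
          rw [setLIntegral_const, Real.volume_Ioc, ← ENNReal.ofReal_mul hyp.le]
      _ ≤ _ := by
          apply ENNReal.ofReal_le_ofReal
          have : 0 ≤ 1 / (p + 1) * (y ^ p * (y - x)) := by positivity
          linarith
  · have hint : IntegrableOn (fun t : ℝ => t ^ p) (Ioc x y) :=
      (intervalIntegrable_iff_integrableOn_Ioc_of_le hxy).1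
        (intervalIntegral.intervalIntegrable_rpow' hp)
    rw [← ofReal_integral_eq_lintegral_ofReal hint, ← intervalIntegral.integral_of_le hxy,
      integral_rpow (Or.inl hp)]
    · apply ENNReal.ofReal_le_ofReal
      have hx' : y ^ p * x ≤ x ^ (p + 1) := by
        rcases hx.eq_or_lt with rfl | hx
        · simp [hp1.ne']
        · rw [rpow_add_one hx.ne']
          exact mul_le_mul_of_nonneg_right (rpow_le_rpow_of_nonpos hx hxy hp0) hx.le
      have : y ^ (p + 1) - x ^ (p + 1) ≤ y ^ p * (y - x) := by
        rw [rpow_add_one hy.ne']; linarith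
      calc (y ^ (p + 1) - x ^ (p + 1)) / (p + 1) ≤ (y ^ p * (y - x)) / (p + 1) := by gcongr
        _ = 1 / (p + 1) * (y ^ p * (y - x)) := by ring
        _ ≤ _ := by linarith
    · filter_upwards [ae_restrict_mem measurableSet_Ioc] with t ht
      exact rpow_nonneg (hx.trans ht.1.le) p

lemma lintegral_rpow_Ioi {l d : ℝ} (hl : 0 < l) (hd : 0 < d) :
    ∫⁻ t in Ioi d, ENNReal.ofReal (t ^ (-1 - l)) = ENNReal.ofReal (d ^ (-l) / l) := by
  rw [← ofReal_integral_eq_lintegral_ofReal (integrableOn_Ioi_rpow_of_lt (by linarith) hd),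
    integral_Ioi_rpow_of_lt (by linarith) hd]
  · congr 1
    rw [show -1 - l + 1 = -l by ring, neg_div_neg_eq]
  · filter_upwards [ae_restrict_mem measurableSet_Ioi] with t ht
    exact rpow_nonneg (hd.trans ht).le _

lemma integral_le_of_lintegral_ofReal_le {Ω : Type*} [MeasurableSpace Ω] {μ : Measure Ω}
    {f : Ω → ℝ} {c : ℝ} (hc : 0 ≤ c) (h : ∫⁻ x, ENNReal.ofReal (f x) ∂μ ≤ ENNReal.ofReal c) :
    ∫ x, f x ∂μ ≤ c := by
  by_cases hf : Integrable f μ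
  · rw [integral_eq_lintegral_pos_part_sub_lintegral_neg_part hf]
    have := ENNReal.toReal_mono ENNReal.ofReal_ne_top h
    rw [ENNReal.toReal_ofReal hc] at this
    exact (sub_le_self _ ENNReal.toReal_nonneg).trans this
  · rwa [integral_undef hf]

lemma lintegral_rpow_mul_kernel_le {b l : ℝ} (hb : 0 < b) (hl : 0 < l) :
    ∃ K : ℝ, 0 < K ∧ ∀ X B : ℝ, 0 < X → 0 ≤ B →
      ∫⁻ w in Ioc (0 : ℝ) 1, ENNReal.ofReal (w ^ (b - 1) * (X + w * B) ^ (-(b + l))) ≤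
        ENNReal.ofReal (K * (X ^ (-l) * (X + B) ^ (-b))) := by
  obtain ⟨K, hK, hKb⟩ := lintegral_rpow_Ioc_le (p := b - 1) (by linarith)
  refine ⟨K + 1 / l, by positivity, fun X B hX hB => ?_⟩
  have hD : 0 < X + B := by linarith
  set D := X + B with hDdef
  set d := X / D with hd
  have hd0 : 0 < d := by positivity
  have hdD : d * D = X := div_mul_cancel₀ _ hD.ne'
  have hXp : 0 < X ^ (-(b + l)) := rpow_pos_of_pos hX _
  have hDp : 0 < D ^ (-(b + l)) := rpow_pos_of_pos hD _
  have near : ∫⁻ w in Ioc 0 d, ENNReal.ofReal (w ^ (b - 1) * (X + w * B) ^ (-(b + l))) ≤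
      ENNReal.ofReal (K * (X ^ (-l) * D ^ (-b))) := by
    calc _ ≤ ∫⁻ w in Ioc 0 d, ENNReal.ofReal (X ^ (-(b + l))) * ENNReal.ofReal (w ^ (b - 1)) := by
          refine setLIntegral_mono' measurableSet_Ioc fun w hw => ?_
          rw [← ENNReal.ofReal_mul hXp.le, mul_comm]
          refine ENNReal.ofReal_le_ofReal (mul_le_mul_of_nonneg_right ?_ (rpow_nonneg hw.1.le _))
          refine rpow_le_rpow_of_nonpos hX ?_ (by linarith)
          linarith [mul_nonneg hw.1.le hB]
      _ ≤ ENNReal.ofReal (X ^ (-(b + l))) * ENNReal.ofReal (K * (d ^ (b - 1) * (d - 0))) := by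
          rw [lintegral_const_mul' _ _ ENNReal.ofReal_ne_top]
          gcongr
          exact hKb 0 d le_rfl hd0.le hd0
      _ = _ := by
          rw [← ENNReal.ofReal_mul hXp.le, sub_zero, ← rpow_add_one hd0.ne', sub_add_cancel]
          congr 1
          rw [hd, div_rpow hX.le hD.le, neg_add, rpow_add hX, rpow_neg hX.le b, rpow_neg hD.le b]
          have := (rpow_pos_of_pos hX b).ne'
          field_simp
  have far : ∫⁻ w in Ioc d 1, ENNReal.ofReal (w ^ (b - 1) * (X + w * B) ^ (-(b + l))) ≤
      ENNReal.ofReal (1 / l * (X ^ (-l) * D ^ (-b))) := by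
    calc _ ≤ ∫⁻ w in Ioc d 1, ENNReal.ofReal (D ^ (-(b + l))) * ENNReal.ofReal (w ^ (-1 - l)) := by
          refine setLIntegral_mono' measurableSet_Ioc fun w hw => ?_
          have hw0 : 0 < w := hd0.trans hw.1
          rw [← ENNReal.ofReal_mul hDp.le]
          refine ENNReal.ofReal_le_ofReal ?_
          have h : (X + w * B) ^ (-(b + l)) ≤ (w * D) ^ (-(b + l)) := by
            refine rpow_le_rpow_of_nonpos (by positivity) ?_ (by linarith)
            nlinarith [hw.2]
          calc _ ≤ w ^ (b - 1) * (w * D) ^ (-(b + l)) := by gcongr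
            _ = _ := by
              rw [mul_rpow hw0.le hD.le, ← mul_assoc, ← rpow_add hw0, mul_comm]
              ring_nf
      _ ≤ ENNReal.ofReal (D ^ (-(b + l))) * ENNReal.ofReal (d ^ (-l) / l) := by
          rw [lintegral_const_mul' _ _ ENNReal.ofReal_ne_top, ← lintegral_rpow_Ioi hl hd0]
          gcongr
          exact Ioc_subset_Ioi_self
      _ = _ := by
          rw [← ENNReal.ofReal_mul hDp.le]
          congr 1
          rw [hd, div_rpow hX.le hD.le, neg_add, rpow_add hD]
          have := (rpow_pos_of_pos hD (-l)).ne'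
          field_simp
  calc _ ≤ ∫⁻ w in Ioc 0 d ∪ Ioc d 1,
        ENNReal.ofReal (w ^ (b - 1) * (X + w * B) ^ (-(b + l))) :=
        lintegral_mono_set (Ioc_subset_Ioc_union_Ioc)
    _ ≤ _ := lintegral_union_le _ _ _
    _ ≤ _ := add_le_add near far
    _ = _ := by
      rw [← ENNReal.ofReal_add (by positivity) (by positivity)]
      congr 1
      ring

lemma setLIntegral_Ico_eq_sub (F : ℝ → ℝ≥0∞) :
    ∫⁻ u in Ico (0 : ℝ) 1, F u = ∫⁻ w in Ioc (0 : ℝ) 1, F (1 - w) := by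
  rw [← lintegral_indicator measurableSet_Ico, ← lintegral_indicator measurableSet_Ioc,
    ← lintegral_sub_left_eq_self _ (1 : ℝ)]
  refine lintegral_congr fun w => ?_
  simp only [indicator, mem_Ico, mem_Ioc]
  congr 1
  simp only [eq_iff_iff]
  constructor <;> rintro ⟨h, h'⟩ <;> constructor <;> linarith

lemma setLIntegral_Ioc_eq_sub (F : ℝ → ℝ≥0∞) :
    ∫⁻ u in Ioc (-1 : ℝ) 0, F u = ∫⁻ w in Ioc (0 : ℝ) 1, F (w - 1) := by
  rw [← lintegral_indicator measurableSet_Ioc, ← lintegral_indicator measurableSet_Ioc,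
    ← lintegral_sub_right_eq_self _ (1 : ℝ)]
  refine lintegral_congr fun w => ?_
  simp only [indicator, mem_Ioc]
  congr 1
  simp only [eq_iff_iff]
  constructor <;> rintro ⟨h, h'⟩ <;> constructor <;> linarith

lemma lintegral_PiMeas_le {ν : ℝ} (hν : ν ≠ -(1 / 2)) : ∃ K : ℝ, 0 ≤ K ∧ ∀ g : ℝ → ℝ≥0∞,
    ∫⁻ u, g u ∂PiMeas ν ≤ ENNReal.ofReal K *
      ((∫⁻ w in Ioc (0 : ℝ) 1, ENNReal.ofReal (w ^ (ν - 1 / 2)) * g (1 - w)) +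
        ∫⁻ w in Ioc (0 : ℝ) 1, ENNReal.ofReal (w ^ (ν - 1 / 2)) * g (w - 1)) := by
  set c := Real.Gamma (ν + 1) / (Real.sqrt π * Real.Gamma (ν + 1 / 2)) with hc
  have hK : 0 ≤ |c| * 2 ^ |ν - 1 / 2| := by positivity
  refine ⟨|c| * 2 ^ |ν - 1 / 2|, hK, fun g => ?_⟩
  have hdens : ∀ w ∈ Ioc (0 : ℝ) 1, ENNReal.ofReal (c * (w * (2 - w)) ^ (ν - 1 / 2)) ≤
      ENNReal.ofReal (|c| * 2 ^ |ν - 1 / 2|) * ENNReal.ofReal (w ^ (ν - 1 / 2)) := by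
    intro w hw
    have hw' : 0 < w * (2 - w) := mul_pos hw.1 (by linarith [hw.2])
    rw [← ENNReal.ofReal_mul hK]
    apply ENNReal.ofReal_le_ofReal
    calc c * (w * (2 - w)) ^ (ν - 1 / 2) ≤ |c| * (w * (2 - w)) ^ (ν - 1 / 2) :=
          mul_le_mul_of_nonneg_right (le_abs_self c) (rpow_nonneg hw'.le _)
      _ ≤ |c| * (2 ^ |ν - 1 / 2| * w ^ (ν - 1 / 2)) := by
          refine mul_le_mul_of_nonneg_left ?_ (abs_nonneg c)
          exact rpow_le_of_comparable _ two_pos hw' hw.1 (by nlinarith [hw.1])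
            (by nlinarith [hw.1, hw.2])
      _ = _ := by ring
  rw [PiMeas, if_neg hν]
  refine (lintegral_withDensity_le_lintegral_mul _ (by fun_prop) g).trans ?_
  rw [← Measure.restrict_congr_set (Ioo_ae_eq_Icc (a := (-1 : ℝ)) (b := 1))]
  have hsub : Ioo (-1 : ℝ) 1 ⊆ Ico 0 1 ∪ Ioc (-1) 0 := fun u hu => by
    rcases le_total 0 u with h | h
    · exact Or.inl ⟨h, hu.2⟩
    · exact Or.inr ⟨hu.1, h⟩
  refine (lintegral_mono_set hsub).trans ((lintegral_union_le _ _ _).trans ?_)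
  rw [setLIntegral_Ico_eq_sub, setLIntegral_Ioc_eq_sub, mul_add,
    ← lintegral_const_mul' _ _ ENNReal.ofReal_ne_top,
    ← lintegral_const_mul' _ _ ENNReal.ofReal_ne_top]
  refine add_le_add (setLIntegral_mono' measurableSet_Ioc fun w hw => ?_)
    (setLIntegral_mono' measurableSet_Ioc fun w hw => ?_)
  · rw [Pi.mul_apply, ← mul_assoc, show 1 - (1 - w) ^ 2 = w * (2 - w) by ring]
    exact mul_le_mul_left (hdens w hw) _
  · rw [Pi.mul_apply, ← mul_assoc, show 1 - (w - 1) ^ 2 = w * (2 - w) by ring]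
    exact mul_le_mul_left (hdens w hw) _

lemma ae_PiMeas_mem_Icc (ν : ℝ) : ∀ᵐ u ∂PiMeas ν, u ∈ Icc (-1 : ℝ) 1 := by
  rw [PiMeas]
  split_ifs with h
  · refine Measure.ae_smul_measure ?_ _
    simp [ae_add_measure_iff]
  · exact (withDensity_absolutelyContinuous _ _).ae_le (ae_restrict_mem measurableSet_Icc)

lemma PiMeas_univ_ne_top {ν : ℝ} (hν : -(1 / 2) ≤ ν) : PiMeas ν univ ≠ ∞ := by
  by_cases h : ν = -(1 / 2)
  · rw [PiMeas, if_pos h]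
    simp
  · have h' : -1 < ν - 1 / 2 := by linarith [lt_of_le_of_ne hν (Ne.symm h)]
    obtain ⟨K, -, hKb⟩ := lintegral_PiMeas_le h
    obtain ⟨M, -, hMb⟩ := lintegral_rpow_Ioc_le h'
    have hM := (hMb 0 1 le_rfl zero_le_one one_pos).trans_lt ENNReal.ofReal_lt_top
    have := hKb fun _ => 1
    simp only [lintegral_one, mul_one] at this
    exact (this.trans_lt (ENNReal.mul_lt_top ENNReal.ofReal_lt_top
      (ENNReal.add_lt_top.2 ⟨hM, hM⟩))).ne

lemma lintegral_PiMeas_const_le {ν : ℝ} (hν : -(1 / 2) ≤ ν) : ∃ M : ℝ, 0 < M ∧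
    ∀ (f : ℝ → ℝ) (c : ℝ), 0 ≤ c → (∀ u ∈ Icc (-1 : ℝ) 1, f u ≤ c) →
      ∫⁻ u, ENNReal.ofReal (f u) ∂PiMeas ν ≤ ENNReal.ofReal (M * c) := by
  refine ⟨(PiMeas ν univ).toReal + 1, by positivity, fun f c hc hf => ?_⟩
  calc ∫⁻ u, ENNReal.ofReal (f u) ∂PiMeas ν ≤ ∫⁻ _, ENNReal.ofReal c ∂PiMeas ν := by
        refine lintegral_mono_ae ?_
        filter_upwards [ae_PiMeas_mem_Icc ν] with u hu
        exact ENNReal.ofReal_le_ofReal (hf u hu)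
    _ = ENNReal.ofReal ((PiMeas ν univ).toReal * c) := by
        rw [lintegral_const, ENNReal.ofReal_mul ENNReal.toReal_nonneg,
          ENNReal.ofReal_toReal (PiMeas_univ_ne_top hν), mul_comm]
    _ ≤ _ := by
        gcongr
        linarith

lemma lintegral_PiMeas_kernel_le {ν b l : ℝ} (hν : -(1 / 2) ≤ ν) (hb : b ≤ ν + 1 / 2)
    (hl : 0 < l) : ∃ K : ℝ, 0 < K ∧ ∀ X B : ℝ, 0 < X → 0 ≤ B →
      ∫⁻ u, ENNReal.ofReal ((X + (1 - u) * B) ^ (-(b + l))) ∂PiMeas ν ≤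
        ENNReal.ofReal (K * (X ^ (-l) * (X + B) ^ (-b))) := by
  rcases le_or_gt b 0 with hb0 | hb0
  · obtain ⟨M, hM, hMb⟩ := lintegral_PiMeas_const_le hν
    refine ⟨M * 2 ^ (-b), by positivity, fun X B hX hB => ?_⟩
    have hD : 0 < X + B := by linarith
    rw [mul_assoc]
    refine hMb _ _ (by positivity) fun u hu => ?_
    have hXY : X ≤ X + (1 - u) * B := by nlinarith [hu.2]
    have hY : 0 < X + (1 - u) * B := hX.trans_le hXY
    rw [neg_add, rpow_add hY, mul_comm (X ^ (-l)), ← mul_assoc, ← mul_rpow two_pos.le hD.le]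
    gcongr ?_ * ?_
    · exact rpow_le_rpow hY.le (by nlinarith [hu.1]) (by linarith)
    · exact rpow_le_rpow_of_nonpos hX hXY (by linarith)
  · obtain ⟨K, hK, hKb⟩ := lintegral_PiMeas_le (ν := ν) (by intro h; linarith)
    obtain ⟨J, hJ, hJb⟩ := lintegral_rpow_mul_kernel_le hb0 hl
    obtain ⟨M, hM, hMb⟩ := lintegral_rpow_Ioc_le (p := ν - 1 / 2) (by linarith)
    refine ⟨K * (J + M) + 1, by positivity, fun X B hX hB => (hKb _).trans ?_⟩
    have hD : 0 < X + B := by linarith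
    have hP : 0 < X ^ (-l) * (X + B) ^ (-b) := by positivity
    calc _ ≤ ENNReal.ofReal K * (ENNReal.ofReal (J * (X ^ (-l) * (X + B) ^ (-b))) +
          ENNReal.ofReal (X ^ (-l) * (X + B) ^ (-b)) * ENNReal.ofReal M) := by
          gcongr
          · refine le_trans (setLIntegral_mono' measurableSet_Ioc fun w hw => ?_) (hJb X B hX hB)
            rw [← ENNReal.ofReal_mul (rpow_nonneg hw.1.le _), sub_sub_cancel]
            have : 0 < X + w * B := by linarith [mul_nonneg hw.1.le hB]
            gcongr ENNReal.ofReal (?_ * _)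
            exact rpow_le_rpow_of_exponent_ge hw.1 hw.2 (by linarith)
          · calc _ ≤ ∫⁻ w in Ioc (0 : ℝ) 1, ENNReal.ofReal (X ^ (-l) * (X + B) ^ (-b)) *
                  ENNReal.ofReal (w ^ (ν - 1 / 2)) := by
                  refine setLIntegral_mono' measurableSet_Ioc fun w hw => ?_
                  rw [mul_comm]
                  gcongr
                  have hY : X + B ≤ X + (1 - (w - 1)) * B := by nlinarith [hw.2]
                  have hY0 := hD.trans_le hY
                  rw [neg_add, rpow_add hY0, mul_comm]
                  gcongr ?_ * ?_
                  · exact rpow_le_rpow_of_nonpos hX (by linarith) (by linarith)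
                  · exact rpow_le_rpow_of_nonpos hD hY (by linarith)
              _ ≤ _ := by
                  rw [lintegral_const_mul' _ _ ENNReal.ofReal_ne_top]
                  gcongr
                  simpa using hMb 0 1 le_rfl zero_le_one one_pos
      _ = ENNReal.ofReal (K * (J + M) * (X ^ (-l) * (X + B) ^ (-b))) := by
          rw [← ENNReal.ofReal_mul hP.le, ← ENNReal.ofReal_add (by positivity) (by positivity),
            ← ENNReal.ofReal_mul hK]
          congr 1
          ring
      _ ≤ _ := by
          gcongr
          linarith

lemma integral_PiMeas_const_le {ν : ℝ} (hν : -(1 / 2) ≤ ν) : ∃ M : ℝ, 0 < M ∧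
    ∀ (f : ℝ → ℝ) (c : ℝ), 0 ≤ c → (∀ u ∈ Icc (-1 : ℝ) 1, f u ≤ c) →
      ∫ u, f u ∂PiMeas ν ≤ M * c := by
  obtain ⟨M, hM, hMb⟩ := lintegral_PiMeas_const_le hν
  exact ⟨M, hM, fun f c hc hf =>
    integral_le_of_lintegral_ofReal_le (by positivity) (hMb f c hc hf)⟩

lemma integral_PiMeas_kernel_le {ν b l : ℝ} (hν : -(1 / 2) ≤ ν) (hb : b ≤ ν + 1 / 2)
    (hl : 0 < l) : ∃ K : ℝ, 0 < K ∧ ∀ (f : ℝ → ℝ) (c X B : ℝ), 0 ≤ c → 0 < X → 0 ≤ B →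
      (∀ u ∈ Icc (-1 : ℝ) 1, f u ≤ c * (X + (1 - u) * B) ^ (-(b + l))) →
        ∫ u, f u ∂PiMeas ν ≤ c * (K * (X ^ (-l) * (X + B) ^ (-b))) := by
  obtain ⟨K, hK, hKb⟩ := lintegral_PiMeas_kernel_le hν hb hl
  refine ⟨K, hK, fun f c X B hc hX hB hf => ?_⟩
  have hD : 0 < X + B := by linarith
  refine integral_le_of_lintegral_ofReal_le (by positivity) ?_
  calc _ ≤ ∫⁻ u, ENNReal.ofReal c * ENNReal.ofReal ((X + (1 - u) * B) ^ (-(b + l)))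
        ∂PiMeas ν := by
        refine lintegral_mono_ae ?_
        filter_upwards [ae_PiMeas_mem_Icc ν] with u hu
        rw [← ENNReal.ofReal_mul hc]
        exact ENNReal.ofReal_le_ofReal (hf u hu)
    _ ≤ _ := by
        rw [lintegral_const_mul' _ _ ENNReal.ofReal_ne_top, ENNReal.ofReal_mul hc]
        gcongr
        exact hKb X B hX hB

lemma integral_integral_kernel_le {ν₁ ν₂ a b l : ℝ} (hν₁ : -(1 / 2) ≤ ν₁) (hν₂ : -(1 / 2) ≤ ν₂)
    (ha : a ≤ ν₁ + 1 / 2) (hb : b ≤ ν₂ + 1 / 2) (ha' : -(1 / 2) < a) (hb' : -(1 / 2) < b)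
    (hl : 1 / 2 ≤ l) : ∃ K : ℝ, 0 < K ∧ ∀ P Q : ℝ, 0 ≤ P → 0 ≤ Q → P + Q < 1 →
      ∫ v, (∫ u, (1 - u * P - v * Q) ^ (-(a + b + l)) ∂PiMeas ν₁) ∂PiMeas ν₂ ≤
        K * ((1 - P - Q) ^ (-l) * (1 - Q) ^ (-a) * (1 - P) ^ (-b)) := by
  obtain ⟨M₁, hM₁, hM₁b⟩ := integral_PiMeas_const_le hν₁
  rcases le_or_gt 0 a with ha0 | ha0
  · obtain ⟨K₁, hK₁, hK₁b⟩ := integral_PiMeas_kernel_le hν₁ ha (l := b + l) (by linarith)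
    obtain ⟨K₂, hK₂, hK₂b⟩ := integral_PiMeas_kernel_le hν₂ hb (l := l) (by linarith)
    refine ⟨K₁ * K₂, by positivity, fun P Q hP hQ hPQ => ?_⟩
    have hD₁ : 0 < 1 - Q := by linarith
    have key := hK₂b (fun v => ∫ u, (1 - u * P - v * Q) ^ (-(a + b + l)) ∂PiMeas ν₁)
      (K₁ * (1 - Q) ^ (-a)) (1 - P - Q) Q (by positivity) (by linarith) hQ ?_
    · refine key.trans (le_of_eq ?_)
      rw [sub_add_cancel]
      ring
    · intro v hv
      have hX : 1 - P - Q ≤ 1 - P - v * Q := by nlinarith [hv.2]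
      have hX0 : 0 < 1 - P - v * Q := by linarith
      have inner := hK₁b (fun u => (1 - u * P - v * Q) ^ (-(a + b + l))) 1 (1 - P - v * Q) P
        zero_le_one hX0 hP fun u _ => le_of_eq (by ring_nf)
      refine inner.trans ?_
      have h : (1 - P - v * Q + P) ^ (-a) ≤ (1 - Q) ^ (-a) :=
        rpow_le_rpow_of_nonpos hD₁ (by linarith) (by linarith)
      rw [one_mul, show 1 - P - Q + (1 - v) * Q = 1 - P - v * Q by ring, mul_assoc,
        mul_comm ((1 - Q) ^ (-a))]
      gcongr
  rcases le_or_gt 0 (a + b + l) with hs | hs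
  · obtain ⟨K₂, hK₂, hK₂b⟩ := integral_PiMeas_kernel_le hν₂ hb (l := a + l) (by linarith)
    refine ⟨M₁ * K₂, by positivity, fun P Q hP hQ hPQ => ?_⟩
    have hR : 0 < 1 - P - Q := by linarith
    have hD₁ : 0 < 1 - Q := by linarith
    have hD₂ : 0 < 1 - P := by linarith
    have key := hK₂b (fun v => ∫ u, (1 - u * P - v * Q) ^ (-(a + b + l)) ∂PiMeas ν₁)
      M₁ (1 - P - Q) Q hM₁.le hR hQ ?_
    · refine key.trans ?_
      rw [sub_add_cancel, ← mul_assoc]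
      gcongr
      rw [add_comm a, neg_add, rpow_add hR]
      gcongr
      · linarith
      · linarith
    · intro v hv
      have hX : 1 - P - Q ≤ 1 - P - v * Q := by nlinarith [hv.2]
      have hX0 : 0 < 1 - P - v * Q := by linarith
      rw [show 1 - P - Q + (1 - v) * Q = 1 - P - v * Q by ring]
      refine hM₁b _ _ (by positivity) fun u hu => ?_
      rw [show b + (a + l) = a + b + l by ring]
      exact rpow_le_rpow_of_nonpos hX0 (by nlinarith [hu.2]) (by linarith)
  · obtain ⟨M₂, hM₂, hM₂b⟩ := integral_PiMeas_const_le hν₂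
    refine ⟨M₂ * (M₁ * 2 ^ (-(a + b + l))) * 2, by positivity, fun P Q hP hQ hPQ => ?_⟩
    have hR : 0 < 1 - P - Q := by linarith
    have hD₁ : 0 < 1 - Q := by linarith
    have hD₂ : 0 < 1 - P := by linarith
    have half_le : ∀ x c : ℝ, 1 / 2 ≤ x → x ≤ 1 → 0 ≤ c → c ≤ 1 → 1 / 2 ≤ x ^ c :=
      fun x c hx hx' hc hc' => by
        have := rpow_le_rpow_of_exponent_ge (by linarith) hx' hc'
        rw [rpow_one] at this
        linarith
    have lower : 1 / 2 ≤ (1 - P - Q) ^ (-l) * (1 - Q) ^ (-a) * (1 - P) ^ (-b) := by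
      rcases le_total Q P with h | h
      · have h₁ : 1 / 2 ≤ (1 - Q) ^ (-a) :=
          half_le _ _ (by linarith) (by linarith) (by linarith) (by linarith)
        have h₂ : 1 ≤ (1 - P - Q) ^ (-l) * (1 - P) ^ (-b) := by
          calc 1 ≤ (1 - P - Q) ^ (-l + -b) :=
                one_le_rpow_of_pos_of_le_one_of_nonpos hR (by linarith) (by linarith)
            _ ≤ _ := by
                rw [rpow_add hR]
                gcongr ?_ * ?_
                exact rpow_le_rpow hR.le (by linarith) (by linarith)
        nlinarith
      · have h₁ : 1 / 2 ≤ (1 - P) ^ (-b) :=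
          half_le _ _ (by linarith) (by linarith) (by linarith) (by linarith)
        have h₂ : 1 ≤ (1 - P - Q) ^ (-l) * (1 - Q) ^ (-a) := by
          calc 1 ≤ (1 - P - Q) ^ (-l + -a) :=
                one_le_rpow_of_pos_of_le_one_of_nonpos hR (by linarith) (by linarith)
            _ ≤ _ := by
                rw [rpow_add hR]
                gcongr
                · linarith
                · linarith
        nlinarith
    have upper := hM₂b (fun v => ∫ u, (1 - u * P - v * Q) ^ (-(a + b + l)) ∂PiMeas ν₁)
      (M₁ * 2 ^ (-(a + b + l))) (by positivity) fun v hv => hM₁b _ _ (by positivity) fun u hu =>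
        rpow_le_rpow (by nlinarith [hv.2, hu.2]) (by nlinarith [hv.1, hu.1]) (by linarith)
    have hC : 0 < M₂ * (M₁ * 2 ^ (-(a + b + l))) := by positivity
    nlinarith

lemma sin_half_nonneg {θ : ℝ} (hθ : θ ∈ Icc 0 π) : 0 ≤ sin (θ / 2) :=
  sin_nonneg_of_nonneg_of_le_pi (by linarith [hθ.1]) (by linarith [hθ.1, hθ.2])

lemma cos_half_nonneg {θ : ℝ} (hθ : θ ∈ Icc 0 π) : 0 ≤ cos (θ / 2) :=
  cos_nonneg_of_mem_Icc ⟨by linarith [hθ.1, pi_pos], by linarith [hθ.2]⟩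

lemma cos_half_sub (θ φ : ℝ) : cos ((θ - φ) / 2) =
    sin (θ / 2) * sin (φ / 2) + cos (θ / 2) * cos (φ / 2) := by
  rw [sub_div, cos_sub]
  ring

lemma sq_sub_le_gap {θ φ : ℝ} (hθ : θ ∈ Icc 0 π) (hφ : φ ∈ Icc 0 π) :
    (θ - φ) ^ 2 ≤ 20 * (1 - sin (θ / 2) * sin (φ / 2) - cos (θ / 2) * cos (φ / 2)) := by
  have h := cos_le_one_sub_mul_cos_sq (x := (θ - φ) / 2)
    (abs_le.2 ⟨by linarith [hθ.1, hφ.2, pi_pos], by linarith [hφ.1, hθ.2, pi_pos]⟩)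
  rw [cos_half_sub] at h
  have hpi : π ^ 2 ≤ 10 := by nlinarith [pi_lt_d2, pi_pos]
  have h' : 1 / 5 ≤ 2 / π ^ 2 := by
    rw [div_le_div_iff₀ (by norm_num) (by positivity)]
    linarith
  nlinarith [mul_le_mul_of_nonneg_right h' (sq_nonneg ((θ - φ) / 2))]

lemma gap_pos {θ φ : ℝ} (hθ : θ ∈ Icc 0 π) (hφ : φ ∈ Icc 0 π) (hne : θ ≠ φ) :
    0 < 1 - sin (θ / 2) * sin (φ / 2) - cos (θ / 2) * cos (φ / 2) := by
  have := sq_sub_le_gap hθ hφ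
  have := sq_pos_of_ne_zero (sub_ne_zero.2 hne)
  linarith

lemma sq_le_one_sub_cos_mul_cos {θ φ : ℝ} (hθ : θ ∈ Icc 0 π) :
    θ ^ 2 ≤ 20 * (1 - cos (θ / 2) * cos (φ / 2)) := by
  have h := mul_le_sin (x := θ / 2) (by linarith [hθ.1]) (by linarith [hθ.2])
  have h' : θ ≤ π * sin (θ / 2) := by
    have : 2 / π * (θ / 2) = θ / π := by ring
    rw [this, div_le_iff₀ pi_pos] at h
    linarith
  have hpi : π ^ 2 ≤ 10 := by nlinarith [pi_lt_d2, pi_pos]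
  have h2 : θ ^ 2 ≤ (π * sin (θ / 2)) ^ 2 := pow_le_pow_left₀ hθ.1 h' 2
  rw [mul_pow] at h2
  nlinarith [sq_nonneg (cos (θ / 2) - cos (φ / 2)), sin_sq_add_cos_sq (θ / 2), cos_sq_le_one (φ / 2),
    mul_le_mul_of_nonneg_right hpi (sq_nonneg (sin (θ / 2)))]

lemma one_sub_cos_mul_cos_le_sq {θ φ : ℝ} (hθ : θ ∈ Icc 0 π) (hφ : φ ∈ Icc 0 π) :
    1 - cos (θ / 2) * cos (φ / 2) ≤ (θ + |θ - φ|) ^ 2 := by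
  have h := one_sub_sq_div_two_le_cos (x := (θ - φ) / 2)
  rw [cos_half_sub] at h
  have h₁ := sin_le (x := θ / 2) (by linarith [hθ.1])
  have h₂ := sin_le (x := φ / 2) (by linarith [hφ.1])
  have h₃ := mul_le_mul h₁ h₂ (sin_half_nonneg hφ) (by linarith [hθ.1])
  have h₄ : φ ≤ θ + |θ - φ| := by linarith [neg_abs_le (θ - φ)]
  have h₅ := mul_le_mul_of_nonneg_left h₄ hθ.1
  nlinarith [sq_abs (θ - φ), abs_nonneg (θ - φ), hθ.1, mul_nonneg hθ.1 (abs_nonneg (θ - φ))]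

lemma one_le_one_sub_sin_mul_sin {θ φ t : ℝ} (hθ : θ ∈ Icc 0 π) (hφ : φ ∈ Icc 0 π)
    (ht : 1 ≤ 2 * cos (t / 2) ^ 2) (ht' : 0 ≤ cos (t / 2)) (htθ : |t - θ| ≤ |θ - φ|) :
    1 ≤ 28 * (1 - sin (θ / 2) * sin (φ / 2)) := by
  have h := (le_abs_self _).trans (abs_cos_sub_cos_le (t / 2) (θ / 2))
  rw [← sub_div, abs_div, abs_two] at h
  have h₁ : cos (t / 2) ≤ cos (θ / 2) + |θ - φ| / 2 := by linarith
  have h₂ := pow_le_pow_left₀ ht' h₁ 2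
  have h₃ := sq_sub_le_gap hθ hφ
  rw [← sq_abs] at h₃
  nlinarith [sq_nonneg (cos (θ / 2) - |θ - φ| / 2), sin_sq_add_cos_sq (θ / 2),
    sin_sq_le_one (φ / 2), sq_nonneg (sin (θ / 2) - sin (φ / 2)),
    mul_nonneg (cos_half_nonneg hθ) (cos_half_nonneg hφ)]

lemma lintegral_left_half_le {p : ℝ} (q : ℝ) (hp : -1 < p) : ∃ K : ℝ, 0 < K ∧
    ∀ θ ∈ Icc (0 : ℝ) π, ∀ φ ∈ Icc (0 : ℝ) π, θ ≠ φ →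
      ∫⁻ t in Ioo (θ - |θ - φ|) (θ + |θ - φ|) ∩ Ioc 0 (π / 2),
          ENNReal.ofReal (sin (t / 2) ^ p * cos (t / 2) ^ q) ≤
        ENNReal.ofReal (K * (|θ - φ| * (1 - cos (θ / 2) * cos (φ / 2)) ^ (p / 2) *
          (1 - sin (θ / 2) * sin (φ / 2)) ^ (q / 2))) := by
  obtain ⟨K, hK, hKb⟩ := lintegral_rpow_Ioc_le hp
  refine ⟨4 ^ |p| * 28 ^ |q / 2| * (K * (80 ^ |p / 2| * 2)), by positivity,
    fun θ hθ φ hφ hne => ?_⟩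
  have hr : 0 < |θ - φ| := abs_pos.2 (sub_ne_zero.2 hne)
  have hgap := gap_pos hθ hφ hne
  have hsq := sq_sub_le_gap hθ hφ
  have hP := mul_nonneg (sin_half_nonneg hθ) (sin_half_nonneg hφ)
  have hQ := mul_nonneg (cos_half_nonneg hθ) (cos_half_nonneg hφ)
  have hlow := sq_le_one_sub_cos_mul_cos (φ := φ) hθ
  have hupp := one_sub_cos_mul_cos_le_sq hθ hφ
  have hwide := fun t => one_le_one_sub_sin_mul_sin (t := t) hθ hφ
  rw [← sq_abs] at hsq
  set r := |θ - φ|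
  set D₁ := 1 - cos (θ / 2) * cos (φ / 2)
  set D₂ := 1 - sin (θ / 2) * sin (φ / 2)
  have hD₁ : 0 < D₁ := by linarith
  have hD₂ : 0 < D₂ := by linarith
  have hy : 0 < θ + r := by linarith [hθ.1]
  have hyp : (θ + r) ^ p ≤ 80 ^ |p / 2| * D₁ ^ (p / 2) := by
    have : (θ + r) ^ p = ((θ + r) ^ 2) ^ (p / 2) := by
      rw [← rpow_natCast, ← rpow_mul hy.le]
      congr 1
      push_cast
      ring
    rw [this]
    exact rpow_le_of_comparable _ (by norm_num) (by positivity) hD₁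
      (by nlinarith [sq_nonneg (θ - r)]) (by nlinarith)
  have hpt : ∀ t ∈ Ioo (θ - r) (θ + r) ∩ Ioc 0 (π / 2),
      sin (t / 2) ^ p * cos (t / 2) ^ q ≤ 4 ^ |p| * 28 ^ |q / 2| * D₂ ^ (q / 2) * t ^ p := by
    rintro t ⟨⟨ht1, ht2⟩, ht3, ht4⟩
    have hs := mul_le_sin (x := t / 2) (by linarith) (by linarith [pi_pos])
    have hs' : t ≤ 4 * sin (t / 2) := by
      have : 2 / π * (t / 2) = t / π := by ring
      rw [this, div_le_iff₀ pi_pos] at hs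
      nlinarith [pi_lt_four, sin_nonneg_of_nonneg_of_le_pi (x := t / 2) (by linarith)
        (by linarith)]
    have hsin : sin (t / 2) ^ p ≤ 4 ^ |p| * t ^ p :=
      rpow_le_of_comparable p (by norm_num) (by linarith) ht3
        (by linarith [sin_le (x := t / 2) (by linarith)]) hs'
    have hc0 : 0 < cos (t / 2) := cos_pos_of_mem_Ioo ⟨by linarith, by linarith⟩
    have hc1 : 1 ≤ 2 * cos (t / 2) ^ 2 := by
      have h := cos_sq (t / 2)
      have : 0 ≤ cos (2 * (t / 2)) := cos_nonneg_of_mem_Icc ⟨by linarith, by linarith⟩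
      linarith
    have hcos : cos (t / 2) ^ q ≤ 28 ^ |q / 2| * D₂ ^ (q / 2) := by
      have : cos (t / 2) ^ q = (cos (t / 2) ^ 2) ^ (q / 2) := by
        rw [← rpow_natCast, ← rpow_mul hc0.le]
        congr 1
        push_cast
        ring
      rw [this]
      have h28 := hwide t hc1 hc0.le (abs_le.2 ⟨by linarith, by linarith⟩)
      exact rpow_le_of_comparable _ (by norm_num) (by positivity) hD₂
        (by linarith [cos_sq_le_one (t / 2)]) (by linarith)
    calc _ ≤ (4 ^ |p| * t ^ p) * (28 ^ |q / 2| * D₂ ^ (q / 2)) := by gcongr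
      _ = _ := by ring
  have hC : 0 ≤ 4 ^ |p| * 28 ^ |q / 2| * D₂ ^ (q / 2) := by positivity
  have hx : max (θ - r) 0 ≤ θ + r := max_le (by linarith) hy.le
  calc _ ≤ ∫⁻ t in Ioo (θ - r) (θ + r) ∩ Ioc 0 (π / 2),
        ENNReal.ofReal (4 ^ |p| * 28 ^ |q / 2| * D₂ ^ (q / 2)) * ENNReal.ofReal (t ^ p) := by
        refine setLIntegral_mono' (measurableSet_Ioo.inter measurableSet_Ioc) fun t ht => ?_
        rw [← ENNReal.ofReal_mul hC]
        exact ENNReal.ofReal_le_ofReal (hpt t ht)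
    _ ≤ ENNReal.ofReal (4 ^ |p| * 28 ^ |q / 2| * D₂ ^ (q / 2)) *
        ∫⁻ t in Ioc (max (θ - r) 0) (θ + r), ENNReal.ofReal (t ^ p) := by
        rw [lintegral_const_mul' _ _ ENNReal.ofReal_ne_top]
        gcongr
        rintro t ⟨ht, ht'⟩
        exact ⟨max_lt ht.1 ht'.1, ht.2.le⟩
    _ ≤ ENNReal.ofReal (4 ^ |p| * 28 ^ |q / 2| * D₂ ^ (q / 2)) *
        ENNReal.ofReal (K * (80 ^ |p / 2| * D₁ ^ (p / 2) * (2 * r))) := by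
        gcongr
        refine (hKb _ _ (le_max_right _ _) hx hy).trans ?_
        gcongr
        linarith [le_max_left (θ - r) 0]
    _ = _ := by
        rw [← ENNReal.ofReal_mul hC]
        congr 1
        ring

lemma measurableSet_ballI (θ r : ℝ) : MeasurableSet (ballI θ r) :=
  measurableSet_Ioo.inter measurableSet_Icc

lemma muab_ballI (α β θ r : ℝ) : muab α β (ballI θ r) =
    ∫⁻ t in Ioo (θ - r) (θ + r) ∩ Ioo 0 π,
      ENNReal.ofReal (sin (t / 2) ^ (2 * α + 1) * cos (t / 2) ^ (2 * β + 1)) := by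
  rw [muab, withDensity_apply', Measure.restrict_restrict (measurableSet_ballI θ r), ballI,
    inter_assoc, inter_self]
  congr 1
  exact Measure.restrict_congr_set ((ae_eq_refl _).inter Ioo_ae_eq_Icc.symm)

lemma muab_ballI_le {α β : ℝ} (hα : -1 < α) (hβ : -1 < β) : ∃ K : ℝ, 0 < K ∧
    ∀ θ ∈ Icc (0 : ℝ) π, ∀ φ ∈ Icc (0 : ℝ) π, θ ≠ φ →
      muab α β (ballI θ |θ - φ|) ≤
        ENNReal.ofReal (K * (|θ - φ| * (1 - cos (θ / 2) * cos (φ / 2)) ^ (α + 1 / 2) *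
          (1 - sin (θ / 2) * sin (φ / 2)) ^ (β + 1 / 2))) := by
  obtain ⟨K₁, hK₁, hK₁b⟩ := lintegral_left_half_le (p := 2 * α + 1) (2 * β + 1) (by linarith)
  obtain ⟨K₂, hK₂, hK₂b⟩ := lintegral_left_half_le (p := 2 * β + 1) (2 * α + 1) (by linarith)
  refine ⟨K₁ + K₂, by positivity, fun θ hθ φ hφ hne => ?_⟩
  have hrefl : ∀ x ∈ Icc (0 : ℝ) π, π - x ∈ Icc 0 π := fun x hx =>
    ⟨by linarith [hx.2], by linarith [hx.1]⟩
  have hsin : ∀ x : ℝ, sin ((π - x) / 2) = cos (x / 2) := fun x => by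
    rw [sub_div, sin_pi_div_two_sub]
  have hcos : ∀ x : ℝ, cos ((π - x) / 2) = sin (x / 2) := fun x => by
    rw [sub_div, cos_pi_div_two_sub]
  have left := hK₁b θ hθ φ hφ hne
  have right := hK₂b (π - θ) (hrefl θ hθ) (π - φ) (hrefl φ hφ) (by simpa using hne)
  have habs : |π - θ - (π - φ)| = |θ - φ| := by rw [abs_sub_comm]; ring_nf
  simp only [hsin, hcos, habs, show (2 * α + 1) / 2 = α + 1 / 2 by ring,
    show (2 * β + 1) / 2 = β + 1 / 2 by ring] at left right
  have hgap := gap_pos hθ hφ hne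
  have hP := mul_nonneg (sin_half_nonneg hθ) (sin_half_nonneg hφ)
  have hQ := mul_nonneg (cos_half_nonneg hθ) (cos_half_nonneg hφ)
  have hD₁ : 0 < 1 - cos (θ / 2) * cos (φ / 2) := by linarith
  have hD₂ : 0 < 1 - sin (θ / 2) * sin (φ / 2) := by linarith
  have hreflect : ∫⁻ t in Ioo (θ - |θ - φ|) (θ + |θ - φ|) ∩ Ico (π / 2) π,
      ENNReal.ofReal (sin (t / 2) ^ (2 * α + 1) * cos (t / 2) ^ (2 * β + 1)) =
      ∫⁻ t in Ioo (π - θ - |θ - φ|) (π - θ + |θ - φ|) ∩ Ioc 0 (π / 2),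
        ENNReal.ofReal (sin (t / 2) ^ (2 * β + 1) * cos (t / 2) ^ (2 * α + 1)) := by
    rw [← lintegral_indicator (measurableSet_Ioo.inter measurableSet_Ico),
      ← lintegral_indicator (measurableSet_Ioo.inter measurableSet_Ioc),
      ← lintegral_sub_left_eq_self _ π]
    refine lintegral_congr fun t => ?_
    simp only [indicator, mem_inter_iff, mem_Ioo, mem_Ico, mem_Ioc, hsin, hcos]
    rw [mul_comm (cos (t / 2) ^ (2 * α + 1))]
    congr 1
    simp only [eq_iff_iff]
    constructor <;> rintro ⟨⟨h₁, h₂⟩, h₃, h₄⟩ <;>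
      refine ⟨⟨?_, ?_⟩, ?_, ?_⟩ <;> linarith
  rw [muab_ballI]
  have hsub : Ioo (θ - |θ - φ|) (θ + |θ - φ|) ∩ Ioo 0 π ⊆
      (Ioo (θ - |θ - φ|) (θ + |θ - φ|) ∩ Ioc 0 (π / 2)) ∪
        (Ioo (θ - |θ - φ|) (θ + |θ - φ|) ∩ Ico (π / 2) π) := by
    rintro t ⟨ht, ht'⟩
    rcases le_total t (π / 2) with h | h
    · exact Or.inl ⟨ht, ht'.1, h⟩
    · exact Or.inr ⟨ht, h, ht'.2⟩
  refine (lintegral_mono_set hsub).trans ((lintegral_union_le _ _ _).trans ?_)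
  rw [hreflect]
  refine (add_le_add left right).trans (le_of_eq ?_)
  rw [← ENNReal.ofReal_add (by positivity) (by positivity)]
  congr 1
  ring

lemma muab_ballI_pos (α β : ℝ) {θ φ : ℝ} (hθ : θ ∈ Icc 0 π) (hφ : φ ∈ Icc 0 π) (hne : θ ≠ φ) :
    0 < muab α β (ballI θ |θ - φ|) := by
  rw [muab_ballI, setLIntegral_pos_iff (by fun_prop)]
  have hsub : Ioo (min θ φ) (max θ φ) ⊆ Function.support (fun t : ℝ =>
      ENNReal.ofReal (sin (t / 2) ^ (2 * α + 1) * cos (t / 2) ^ (2 * β + 1))) ∩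
        (Ioo (θ - |θ - φ|) (θ + |θ - φ|) ∩ Ioo 0 π) := by
    rintro t ⟨ht, ht'⟩
    have h0 : 0 < t := (le_min hθ.1 hφ.1).trans_lt ht
    have h1 : t < π := ht'.trans_le (max_le hθ.2 hφ.2)
    have hs : 0 < sin (t / 2) := sin_pos_of_pos_of_lt_pi (by linarith) (by linarith)
    have hc : 0 < cos (t / 2) := cos_pos_of_mem_Ioo ⟨by linarith, by linarith⟩
    refine ⟨?_, ⟨?_, ?_⟩, h0, h1⟩
    · rw [Function.mem_support]
      exact (ENNReal.ofReal_pos.2 (by positivity)).ne'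
    · rcases le_total θ φ with h | h
      · rw [min_eq_left h] at ht
        linarith [abs_nonneg (θ - φ)]
      · rw [min_eq_right h] at ht
        linarith [le_abs_self (θ - φ)]
    · rcases le_total θ φ with h | h
      · rw [max_eq_right h] at ht'
        linarith [neg_abs_le (θ - φ)]
      · rw [max_eq_left h] at ht'
        linarith [abs_nonneg (θ - φ)]
  refine lt_of_lt_of_le ?_ (measure_mono hsub)
  rw [Real.volume_Ioo, ENNReal.ofReal_pos, sub_pos]
  exact min_lt_max.2 hne

lemma rpow_add_le_of_sq_add_sq {x y D ξ : ℝ} (hx : 0 ≤ x) (hy : 0 ≤ y) (hξ : 0 ≤ ξ)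
    (h : x ^ 2 + y ^ 2 ≤ 2 * D) : (x + y) ^ (2 * ξ) ≤ 4 ^ ξ * D ^ ξ := by
  have hD : 0 ≤ D := by nlinarith [sq_nonneg x, sq_nonneg y]
  rw [rpow_mul (by positivity), ← mul_rpow (by norm_num) hD]
  refine rpow_le_rpow (by positivity) ?_ hξ
  rw [rpow_two]
  nlinarith [sq_nonneg (x - y)]

lemma bridge_product_le {α β ξ₁ ξ₂ κ₁ κ₂ l : ℝ} (hα : -1 < α) (hβ : -1 < β)
    (hξ₁ : 0 ≤ ξ₁) (hξ₂ : 0 ≤ ξ₂) (hκ₁ : 0 ≤ κ₁) (hκ₂ : 0 ≤ κ₂)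
    (h₁ : -(1 / 2) ≤ α + ξ₁ + κ₁) (h₂ : -(1 / 2) ≤ β + ξ₂ + κ₂) (hl : 1 / 2 ≤ l) :
    ∃ C : ℝ, 0 < C ∧ ∀ θ ∈ Icc (0 : ℝ) π, ∀ φ ∈ Icc (0 : ℝ) π, θ ≠ φ →
      (sin (θ / 2) + sin (φ / 2)) ^ (2 * ξ₁) * (cos (θ / 2) + cos (φ / 2)) ^ (2 * ξ₂) *
        (∫ v, (∫ u, qf θ φ u v ^ (-(α + β + ξ₁ + ξ₂ + 1 + l)) ∂(PiMeas (α + ξ₁ + κ₁)))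
          ∂(PiMeas (β + ξ₂ + κ₂))) * (muab α β (ballI θ |θ - φ|)).toReal ≤
      C * (|θ - φ| *
        (1 - sin (θ / 2) * sin (φ / 2) - cos (θ / 2) * cos (φ / 2)) ^ (-l)) := by
  obtain ⟨K, hK, hKb⟩ := integral_integral_kernel_le h₁ h₂ (a := α + ξ₁ + 1 / 2)
    (b := β + ξ₂ + 1 / 2) (by linarith) (by linarith) (by linarith) (by linarith) hl
  obtain ⟨M, hM, hMb⟩ := muab_ballI_le hα hβ
  refine ⟨4 ^ ξ₁ * 4 ^ ξ₂ * K * M, by positivity, fun θ hθ φ hφ hne => ?_⟩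
  have hgap := gap_pos hθ hφ hne
  have hP := mul_nonneg (sin_half_nonneg hθ) (sin_half_nonneg hφ)
  have hQ := mul_nonneg (cos_half_nonneg hθ) (cos_half_nonneg hφ)
  have hI := hKb _ _ hP hQ (by linarith)
  have hS := rpow_add_le_of_sq_add_sq (D := 1 - cos (θ / 2) * cos (φ / 2))
    (sin_half_nonneg hθ) (sin_half_nonneg hφ) hξ₁ <| by
      nlinarith [sin_sq_add_cos_sq (θ / 2), sin_sq_add_cos_sq (φ / 2),
        sq_nonneg (cos (θ / 2) - cos (φ / 2))]
  have hT := rpow_add_le_of_sq_add_sq (D := 1 - sin (θ / 2) * sin (φ / 2))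
    (cos_half_nonneg hθ) (cos_half_nonneg hφ) hξ₂ <| by
      nlinarith [sin_sq_add_cos_sq (θ / 2), sin_sq_add_cos_sq (φ / 2),
        sq_nonneg (sin (θ / 2) - sin (φ / 2))]
  have hm := ENNReal.toReal_mono ENNReal.ofReal_ne_top (hMb θ hθ φ hφ hne)
  have hS0 := add_nonneg (sin_half_nonneg hθ) (sin_half_nonneg hφ)
  have hT0 := add_nonneg (cos_half_nonneg hθ) (cos_half_nonneg hφ)
  have hD₁ : 0 < 1 - cos (θ / 2) * cos (φ / 2) := by linarith
  have hD₂ : 0 < 1 - sin (θ / 2) * sin (φ / 2) := by linarith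
  rw [ENNReal.toReal_ofReal (by positivity)] at hm
  have hq : ∀ u v : ℝ, qf θ φ u v ^ (-(α + β + ξ₁ + ξ₂ + 1 + l)) =
      (1 - u * (sin (θ / 2) * sin (φ / 2)) - v * (cos (θ / 2) * cos (φ / 2))) ^
        (-(α + ξ₁ + 1 / 2 + (β + ξ₂ + 1 / 2) + l)) := fun u v => by
    rw [qf]
    ring_nf
  simp only [hq]
  set R := 1 - sin (θ / 2) * sin (φ / 2) - cos (θ / 2) * cos (φ / 2)
  set D₁ := 1 - cos (θ / 2) * cos (φ / 2)
  set D₂ := 1 - sin (θ / 2) * sin (φ / 2)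
  calc _ ≤ (4 ^ ξ₁ * D₁ ^ ξ₁) * (4 ^ ξ₂ * D₂ ^ ξ₂) *
        (K * (R ^ (-l) * D₁ ^ (-(α + ξ₁ + 1 / 2)) * D₂ ^ (-(β + ξ₂ + 1 / 2)))) *
        (M * (|θ - φ| * D₁ ^ (α + 1 / 2) * D₂ ^ (β + 1 / 2))) := by
        refine le_trans (mul_le_mul_of_nonneg_right
          (mul_le_mul_of_nonneg_left hI (by positivity)) ENNReal.toReal_nonneg) ?_
        gcongr
    _ = 4 ^ ξ₁ * 4 ^ ξ₂ * K * M * (|θ - φ| * R ^ (-l)) *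
        (D₁ ^ ξ₁ * D₁ ^ (-(α + ξ₁ + 1 / 2)) * D₁ ^ (α + 1 / 2)) *
        (D₂ ^ ξ₂ * D₂ ^ (-(β + ξ₂ + 1 / 2)) * D₂ ^ (β + 1 / 2)) := by ring
    _ = _ := by
        rw [← rpow_add hD₁, ← rpow_add hD₁, ← rpow_add hD₂, ← rpow_add hD₂,
          show ξ₁ + -(α + ξ₁ + 1 / 2) + (α + 1 / 2) = 0 by ring,
          show ξ₂ + -(β + ξ₂ + 1 / 2) + (β + 1 / 2) = 0 by ring]
        simp

theorem bridge_lemma (α β ξ₁ ξ₂ κ₁ κ₂ : ℝ) (hα : -1 < α) (hβ : -1 < β)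
    (hξ₁ : 0 ≤ ξ₁) (hξ₂ : 0 ≤ ξ₂) (hκ₁ : 0 ≤ κ₁) (hκ₂ : 0 ≤ κ₂)
    (h₁ : -(1/2) ≤ α + ξ₁ + κ₁) (h₂ : -(1/2) ≤ β + ξ₂ + κ₂) :
    ∃ C : ℝ, 0 < C ∧ ∀ θ ∈ Icc (0 : ℝ) π, ∀ φ ∈ Icc (0 : ℝ) π, θ ≠ φ →
      ((Real.sin (θ/2) + Real.sin (φ/2)) ^ (2 * ξ₁) *
        (Real.cos (θ/2) + Real.cos (φ/2)) ^ (2 * ξ₂) *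
        ∫ v, (∫ u, qf θ φ u v ^ (-(α + β + ξ₁ + ξ₂ + 3/2)) ∂(PiMeas (α + ξ₁ + κ₁)))
          ∂(PiMeas (β + ξ₂ + κ₂))
        ≤ C / (muab α β (ballI θ |θ - φ|)).toReal) ∧
      ((Real.sin (θ/2) + Real.sin (φ/2)) ^ (2 * ξ₁) *
        (Real.cos (θ/2) + Real.cos (φ/2)) ^ (2 * ξ₂) *
        ∫ v, (∫ u, qf θ φ u v ^ (-(α + β + ξ₁ + ξ₂ + 2)) ∂(PiMeas (α + ξ₁ + κ₁)))
          ∂(PiMeas (β + ξ₂ + κ₂))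
        ≤ C / (|θ - φ| * (muab α β (ballI θ |θ - φ|)).toReal)) := by

  obtain ⟨C₁, hC₁, hC₁b⟩ := bridge_product_le hα hβ hξ₁ hξ₂ hκ₁ hκ₂ h₁ h₂ (l := 1 / 2) le_rfl
  obtain ⟨C₂, hC₂, hC₂b⟩ :=
    bridge_product_le hα hβ hξ₁ hξ₂ hκ₁ hκ₂ h₁ h₂ (l := 1) (by norm_num)
  obtain ⟨M, -, hMb⟩ := muab_ballI_le hα hβ
  refine ⟨5 * C₁ + 20 * C₂, by positivity, fun θ hθ φ hφ hne => ?_⟩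
  have hr : 0 < |θ - φ| := abs_pos.2 (sub_ne_zero.2 hne)
  have hm : 0 < (muab α β (ballI θ |θ - φ|)).toReal :=
    ENNReal.toReal_pos (muab_ballI_pos α β hθ hφ hne).ne'
      ((hMb θ hθ φ hφ hne).trans_lt ENNReal.ofReal_lt_top).ne
  have hgap := gap_pos hθ hφ hne
  have hsq := sq_sub_le_gap hθ hφ
  rw [← sq_abs] at hsq
  have first := hC₁b θ hθ φ hφ hne
  have second := hC₂b θ hθ φ hφ hne
  rw [show α + β + ξ₁ + ξ₂ + 1 + 1 / 2 = α + β + ξ₁ + ξ₂ + 3 / 2 by ring] at first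
  rw [show α + β + ξ₁ + ξ₂ + 1 + 1 = α + β + ξ₁ + ξ₂ + 2 by ring] at second
  set R := 1 - sin (θ / 2) * sin (φ / 2) - cos (θ / 2) * cos (φ / 2)
  constructor
  · rw [le_div_iff₀ hm]
    have : |θ - φ| * R ^ (-(1 / 2) : ℝ) ≤ 5 := by
      rw [rpow_neg hgap.le, ← sqrt_eq_rpow, ← div_eq_mul_inv, div_le_iff₀ (sqrt_pos.2 hgap)]
      refine abs_le_of_sq_le_sq' ?_ (by positivity) |>.2
      rw [mul_pow, sq_sqrt hgap.le]
      linarith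
    nlinarith
  · rw [le_div_iff₀ (mul_pos hr hm)]
    have : |θ - φ| * (|θ - φ| * R ^ (-1 : ℝ)) ≤ 20 := by
      rw [rpow_neg_one, ← mul_assoc, ← sq, ← div_eq_mul_inv, div_le_iff₀ hgap]
      exact hsq
    nlinarith [mul_le_mul_of_nonneg_left second hr.le]
end
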